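/- arXiv:1907.00679 — 9 statements merged into one kernel-verified Lean document; each statement's English description precedes it below -/
import Mathlib

section
/- Let K be a compact Hausdorff space. If K contains a subset that is not a Borel set, then the Borel σ-algebra generated by the weak-star topology on C*(K) is different from the Borel σ-algebra generated by the weak topology on C*(K), i.e. Bo(C*(K), w*) ≠ Bo(C*(K), w). -/
open NormedSpace MeasureTheory

/-- The weak-star topology on the dual of a normed space `E`: the topology of
pointwise convergence on `E`. -/
noncomputable def weakStarTopology (E : Type*) [NormedAddCommGroup E] [NormedSpace ℝ E] :
    TopologicalSpace (StrongDual ℝ E) :=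
  TopologicalSpace.induced (fun μ : StrongDual ℝ E => (μ : E → ℝ)) Pi.topologicalSpace

/-- The weak topology on a normed space `E`: the topology induced by its topological dual. -/
noncomputable def weakTopology (E : Type*) [NormedAddCommGroup E] [NormedSpace ℝ E] :
    TopologicalSpace E :=
  TopologicalSpace.induced (fun x : E => fun Λ : StrongDual ℝ E => Λ x) Pi.topologicalSpace

lemma span_finite_support (K : Type*) [TopologicalSpace K] [CompactSpace K] (x : K)
    (ν : StrongDual ℝ C(K, ℝ))
    (hν : ν ∈ Submodule.span ℝ ((fun y : K => (ContinuousMap.evalCLM ℝ y : StrongDual ℝ C(K, ℝ))) '' {x}ᶜ)) :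
    ∃ F : Set K, F.Finite ∧ x ∉ F ∧ ∀ f : C(K, ℝ), (∀ y ∈ F, f y = 0) → ν f = 0 := by
  induction hν using Submodule.span_induction with
  | mem ν h =>
    obtain ⟨y, hy, rfl⟩ := h
    refine ⟨{y}, Set.finite_singleton y, fun h => hy (by simpa using h.symm), fun f hf => ?_⟩
    exact hf y rfl
  | zero => exact ⟨∅, Set.finite_empty, by simp, by simp⟩
  | add a b _ _ ha hb =>
    obtain ⟨F, hF, hx, h1⟩ := ha
    obtain ⟨G, hG, hx', h2⟩ := hb
    refine ⟨F ∪ G, hF.union hG, by simp [hx, hx'], fun f hf => ?_⟩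
    simp [h1 f (fun y hy => hf y (Or.inl hy)), h2 f (fun y hy => hf y (Or.inr hy))]
  | smul c a _ ha =>
    obtain ⟨F, hF, hx, h1⟩ := ha
    exact ⟨F, hF, hx, fun f hf => by simp [h1 f hf]⟩

lemma exists_point_functional (K : Type*) [TopologicalSpace K] [CompactSpace K] [T2Space K]
    (x : K) : ∃ Λ : StrongDual ℝ (StrongDual ℝ C(K, ℝ)),
      ∀ y : K, Λ (ContinuousMap.evalCLM ℝ y) ≠ 0 ↔ y = x := by
  set S := Submodule.span ℝ
    ((fun y : K => (ContinuousMap.evalCLM ℝ y : StrongDual ℝ C(K, ℝ))) '' {x}ᶜ) with hS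
  have hx : (ContinuousMap.evalCLM ℝ x : StrongDual ℝ C(K, ℝ)) ∉
      (S.topologicalClosure : Set (StrongDual ℝ C(K, ℝ))) := by
    rw [Submodule.topologicalClosure_coe]
    intro hc
    obtain ⟨ν, hν, hd⟩ := (Metric.mem_closure_iff (α := StrongDual ℝ C(K, ℝ))
      (s := (S : Set (StrongDual ℝ C(K, ℝ))))).1 hc 1 one_pos
    obtain ⟨F, hF, hxF, h0⟩ := span_finite_support K x ν hν
    obtain ⟨f, hf0, hf1, hf⟩ := exists_continuous_zero_one_of_isClosed hF.isClosed
      (isClosed_singleton (x := x)) (by simpa using hxF)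
    have hn : ‖f‖ ≤ 1 := by
      rw [ContinuousMap.norm_le _ zero_le_one]
      intro y
      rw [Real.norm_eq_abs, abs_le]
      exact ⟨by linarith [(hf y).1], (hf y).2⟩
    have h1 : ((ContinuousMap.evalCLM ℝ x : StrongDual ℝ C(K, ℝ)) - ν) f = 1 := by
      rw [ContinuousLinearMap.sub_apply, h0 f (fun y hy => hf0 hy), sub_zero]
      exact hf1 rfl
    have h2 := ((ContinuousMap.evalCLM ℝ x : StrongDual ℝ C(K, ℝ)) - ν).le_opNorm f
    rw [h1, norm_one] at h2
    have hd' : ‖(ContinuousMap.evalCLM ℝ x : StrongDual ℝ C(K, ℝ)) - ν‖ < 1 :=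
      lt_of_eq_of_lt (dist_eq_norm (E := StrongDual ℝ C(K, ℝ)) _ _).symm hd
    nlinarith [norm_nonneg f,
      norm_nonneg ((ContinuousMap.evalCLM ℝ x : StrongDual ℝ C(K, ℝ)) - ν)]
  obtain ⟨Λ, u, hu, hux⟩ := geometric_hahn_banach_closed_point
    (S.topologicalClosure.convex) S.isClosed_topologicalClosure hx
  refine ⟨Λ, fun y => ⟨fun hy => ?_, ?_⟩⟩
  · by_contra hne
    have hm : (ContinuousMap.evalCLM ℝ y : StrongDual ℝ C(K, ℝ)) ∈ S.topologicalClosure :=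
      S.le_topologicalClosure (Submodule.subset_span ⟨y, hne, rfl⟩)
    have := hu _ (S.topologicalClosure.smul_mem (u / Λ (ContinuousMap.evalCLM ℝ y)) hm)
    rw [map_smul, smul_eq_mul, div_mul_cancel₀ _ hy] at this
    exact lt_irrefl _ this
  · rintro rfl
    have := hu 0 (S.topologicalClosure.zero_mem)
    rw [map_zero] at this
    exact (this.trans hux).ne'

/-- If a compact Hausdorff space `K` contains a non-Borel subset, then
the weak-star Borel σ-algebra of `C*(K)` differs from the weak Borel σ-algebra. -/
theorem weakStar_borel_ne_weak_borel_of_exists_nonBorel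
    (K : Type*) [TopologicalSpace K] [CompactSpace K] [T2Space K]
    (h : ∃ s : Set K, ¬ MeasurableSet[borel K] s) :
    @borel (StrongDual ℝ C(K, ℝ)) (weakStarTopology C(K, ℝ)) ≠
      @borel (StrongDual ℝ C(K, ℝ)) (weakTopology (StrongDual ℝ C(K, ℝ))) := by
  intro heq
  obtain ⟨s, hs⟩ := h
  choose Λ hΛ using exists_point_functional K
  let δ : K → StrongDual ℝ C(K, ℝ) := fun y => ContinuousMap.evalCLM ℝ y
  let U : Set (StrongDual ℝ C(K, ℝ)) := ⋃ x ∈ s, {μ | Λ x μ ≠ 0}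
  have hU : @IsOpen _ (weakTopology (StrongDual ℝ C(K, ℝ))) U := by
    letI := weakTopology (StrongDual ℝ C(K, ℝ))
    refine isOpen_biUnion fun x _ => ?_
    refine isOpen_induced_iff.2 ⟨{g | g (Λ x) ≠ 0}, ?_, rfl⟩
    exact isOpen_ne_fun (continuous_apply (Λ x)) continuous_const
  have hUm : MeasurableSet[@borel _ (weakTopology (StrongDual ℝ C(K, ℝ)))] U :=
    MeasurableSpace.measurableSet_generateFrom hU
  rw [← heq] at hUm
  have hδ : @Continuous _ _ _ (weakStarTopology C(K, ℝ)) δ := by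
    refine continuous_induced_rng.2 (continuous_pi fun f => ?_)
    exact f.continuous
  have hδm : @Measurable _ _ (borel K) (@borel _ (weakStarTopology C(K, ℝ))) δ :=
    @Continuous.borel_measurable _ _ _ (weakStarTopology C(K, ℝ)) δ hδ
  apply hs
  have : δ ⁻¹' U = s := by
    ext y
    simp only [U, δ, Set.mem_preimage, Set.mem_iUnion, Set.mem_ofPred_eq, exists_prop, hΛ]
    simp
  rw [← this]
  exact hδm hUm
end

section
/- Assume the continuum hypothesis. Let (X, τ) be a Hausdorff topological space with a countable network. If every subset of X is a Borel set, then X is finite or countable. -/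
open MeasureTheory Cardinal

/-- A family `N` of subsets of a topological space is a *network* if every neighbourhood
of every point contains a member of `N` containing that point. -/
def IsNetwork {X : Type*} [TopologicalSpace X] (N : Set (Set X)) : Prop :=
  ∀ x : X, ∀ U : Set X, IsOpen U → x ∈ U → ∃ n ∈ N, x ∈ n ∧ n ⊆ U

/-- Assume the continuum hypothesis. If a Hausdorff space `X` has a
countable network and every subset of `X` is Borel, then `X` is finite or countable. -/
theorem countable_of_every_subset_borel_of_countable_network
    (CH : Cardinal.continuum = Cardinal.aleph 1)
    (X : Type*) [TopologicalSpace X] [T2Space X]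
    (N : Set (Set X)) (hN : N.Countable) (hnet : IsNetwork N)
    (hB : ∀ s : Set X, MeasurableSet[borel X] s) :
    Finite X ∨ Countable X := by
  right
  by_contra hX
  have h1 : Cardinal.aleph 1 ≤ #X := by
    rw [← not_lt, Cardinal.lt_aleph_one_iff, Cardinal.mk_le_aleph0_iff]
    exact hX
  have CH' : (Cardinal.continuum : Cardinal.{u_1}) = Cardinal.aleph 1 := by
    have h := congrArg Cardinal.lift.{u_1} CH
    rw [Cardinal.lift_continuum, Cardinal.lift_aleph] at h
    have h2 : Cardinal.lift.{u_2} (Cardinal.continuum : Cardinal.{u_1})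
        = Cardinal.lift.{u_2} (Cardinal.aleph 1 : Cardinal.{u_1}) := by
      rw [Cardinal.lift_continuum, Cardinal.lift_aleph]
      simpa using h
    exact Cardinal.lift_injective h2
  have hle : borel X ≤ MeasurableSpace.generateFrom N := by
    refine MeasurableSpace.generateFrom_le fun U hU => ?_
    have hU' : U = ⋃₀ {n ∈ N | n ⊆ U} := by
      ext x
      constructor
      · intro hx
        obtain ⟨n, hn, hxn, hnU⟩ := hnet x U hU hx
        exact ⟨n, ⟨hn, hnU⟩, hxn⟩
      · rintro ⟨n, ⟨_, hnU⟩, hxn⟩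
        exact hnU hxn
    rw [hU']
    exact MeasurableSet.sUnion (hN.mono fun n hn => hn.1)
      fun n hn => MeasurableSpace.measurableSet_generateFrom hn.1
  have hc : #{t : Set X | MeasurableSet[MeasurableSpace.generateFrom N] t} ≤ 𝔠 :=
    MeasurableSpace.cardinal_measurableSet_le_continuum
      ((Cardinal.le_aleph0_iff_set_countable.2 hN).trans Cardinal.aleph0_le_continuum)
  have huniv : {t : Set X | MeasurableSet[MeasurableSpace.generateFrom N] t} = Set.univ :=
    Set.eq_univ_of_forall fun t => hle t (hB t)
  rw [huniv, Cardinal.mk_univ, Cardinal.mk_set] at hc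
  exact absurd ((Cardinal.cantor _).trans_le hc) (not_lt.2 (CH'.trans_le h1))
end

section
/- Let (X, τ) be a Hausdorff topological space with a countable network. If every subset of X is a Borel set, then 2^|X| ≤ 𝔠, where 𝔠 = 2^ℵ₀ is the cardinality of the continuum. -/
open MeasureTheory Cardinal

/-- If a Hausdorff space `X` has a countable network and every subset of
`X` is Borel, then `2 ^ |X| ≤ 𝔠`. -/
theorem two_pow_card_le_continuum_of_every_subset_borel
    (X : Type u) [TopologicalSpace X] [T2Space X]
    (N : Set (Set X)) (hN : N.Countable) (hnet : IsNetwork N)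
    (hB : ∀ s : Set X, MeasurableSet[borel X] s) :
    2 ^ Cardinal.mk X ≤ Cardinal.continuum.{u} := by
  have hle : borel X ≤ MeasurableSpace.generateFrom N := by
    refine MeasurableSpace.generateFrom_le ?_
    intro U hU
    have hU' : U = ⋃₀ {n ∈ N | n ⊆ U} := by
      ext x
      constructor
      · intro hx
        obtain ⟨n, hn, hxn, hnU⟩ := hnet x U hU hx
        exact ⟨n, ⟨hn, hnU⟩, hxn⟩
      · rintro ⟨n, ⟨_, hnU⟩, hxn⟩
        exact hnU hxn
    rw [hU']
    exact MeasurableSet.sUnion (hN.mono fun _ h => h.1)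
      fun n hn => MeasurableSpace.measurableSet_generateFrom hn.1
  have hc : #N ≤ Cardinal.continuum :=
    (Cardinal.le_aleph0_iff_set_countable.2 hN).trans Cardinal.aleph0_le_continuum
  have h := MeasurableSpace.cardinal_measurableSet_le_continuum hc
  rw [← Cardinal.mk_set]
  refine le_trans (Cardinal.mk_le_of_injective
    (f := fun s : Set X =>
      (⟨s, hle s (hB s)⟩ : {t | MeasurableSet[MeasurableSpace.generateFrom N] t})) ?_) h
  intro a b hab
  exact congrArg Subtype.val hab
end

section
/- Let (K, τ) be a compact Hausdorff space. If every subset of K is a Borel set, then K is scattered, i.e. every nonempty closed subset S of K contains a point that is isolated in the subspace topology of S. -/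
open MeasureTheory

open Set Filter Topology in
lemma aux_kern {Z C : Type*} [TopologicalSpace Z] [TopologicalSpace C]
    (φ : Z → C) (hc : Continuous φ) (hcl : IsClosedMap φ) (hs : Function.Surjective φ)
    (hirr : ∀ E : Set Z, E ≠ univ → IsClosed E → φ '' E ≠ univ) [Nonempty C]
    (A : Set C) (hA : MeasurableSet[borel Z] (φ ⁻¹' A)) :
    ∃ O : Set C, IsOpen O ∧ O.Nonempty ∧ ∃ N ∈ residual C, (N ∩ O ⊆ A) ∨ (N ∩ O ⊆ Aᶜ) := by
  have hne : ∀ P : Set Z, IsOpen P → P.Nonempty → (kernImage φ P).Nonempty := by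
    intro P hP hPn
    have h1 := hirr Pᶜ (by rw [Ne, compl_univ_iff]; exact hPn.ne_empty) hP.isClosed_compl
    rw [kernImage_eq_compl]
    exact nonempty_compl.2 h1
  have hop : ∀ P : Set Z, IsOpen P → IsOpen (kernImage φ P) :=
    fun P hP => isClosedMap_iff_kernImage.1 hcl hP
  have hres : comap φ (residual C) ≤ residual Z := by
    apply le_countableGenerate_iff_of_countableInterFilter.mpr
    rintro t ⟨ht, htd⟩
    show t ∈ comap φ (residual C)
    rw [mem_comap'']
    refine residual_of_dense_open (hop t ht) ?_
    rw [dense_iff_inter_open]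
    intro O hO hOn
    have h2 : (φ ⁻¹' O ∩ t).Nonempty :=
      htd.inter_open_nonempty _ (hO.preimage hc) (hOn.preimage hs)
    obtain ⟨y, hy⟩ := hne _ ((hO.preimage hc).inter ht) h2
    obtain ⟨z, rfl⟩ := hs y
    exact ⟨φ z, (hy rfl).1, fun x hx => (hy hx).2⟩
  obtain ⟨u, hu, hAu⟩ : ∃ u : Set Z, IsOpen u ∧ (φ ⁻¹' A) =ᶠ[residual Z] u := by
    borelize Z
    exact MeasurableSet.residualEq_isOpen hA
  have hM : {z | z ∈ φ ⁻¹' A ↔ z ∈ u} ∈ residual Z := eventuallyEq_set.1 hAu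
  have hN := mem_comap''.1 (hres hM)
  rcases u.eq_empty_or_nonempty with rfl | hun
  · refine ⟨univ, isOpen_univ, univ_nonempty, _, hN, Or.inr ?_⟩
    rintro y ⟨hy, -⟩ hyA
    obtain ⟨z, rfl⟩ := hs y
    exact ((hy rfl : _ ↔ _).1 hyA)
  · refine ⟨_, hop u hu, hne u hu hun, _, hN, Or.inl ?_⟩
    rintro y ⟨hy, hyu⟩
    obtain ⟨z, rfl⟩ := hs y
    exact ((hy rfl : _ ↔ _).2 (hyu rfl))

open Set Filter Topology in
lemma aux_nonBaire : ∃ A : Set (ℕ → Bool), ∀ O : Set (ℕ → Bool), IsOpen O → O.Nonempty →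
    ∀ N ∈ residual (ℕ → Bool), ¬ ((N ∩ O ⊆ A) ∨ (N ∩ O ⊆ Aᶜ)) := by
  refine ⟨{y | {n | y n = true} ∈ hyperfilter ℕ}, ?_⟩
  rintro O hO ⟨y0, hy0⟩ N hN
  obtain ⟨n, hn⟩ : ∃ n, PiNat.cylinder y0 n ⊆ O := by
    obtain ⟨_, ⟨x, n, rfl⟩, h1, h2⟩ :=
      (PiNat.isTopologicalBasis_cylinders (E := fun _ : ℕ => Bool)).exists_subset_of_mem_open hy0 hO
    exact ⟨n, by rwa [← PiNat.mem_cylinder_iff_eq.1 h1] at h2⟩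
  let h : (ℕ → Bool) → (ℕ → Bool) := fun y k => if k < n then y k else !(y k)
  have hh : Function.Involutive h := by
    intro y; funext k; simp only [h]; split_ifs <;> simp
  have hcont : Continuous h := by
    refine continuous_pi fun k => ?_
    simp only [h]
    split_ifs
    · exact continuous_apply k
    · exact (continuous_of_discreteTopology (f := not)).comp (continuous_apply (A := fun _ : ℕ => Bool) k)
  let H : (ℕ → Bool) ≃ₜ (ℕ → Bool) :=
    { toEquiv := hh.toPerm h, continuous_toFun := hcont, continuous_invFun := hcont }
  have hN2 : h ⁻¹' N ∈ residual (ℕ → Bool) :=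
    tendsto_residual_of_isOpenMap hcont H.isOpenMap hN
  obtain ⟨y, hyc, hyN, hyN2⟩ := (dense_of_mem_residual (inter_mem hN hN2)).inter_open_nonempty _
    (PiNat.isOpen_cylinder _ y0 n) ⟨y0, PiNat.self_mem_cylinder _ _⟩
  have hyc2 : h y ∈ PiNat.cylinder y0 n := by
    rw [PiNat.mem_cylinder_iff] at hyc ⊢
    intro i hi
    simp [h, hi, hyc i hi]
  have key : {k | h y k = true} ∈ hyperfilter ℕ ↔ {k | y k = true} ∉ hyperfilter ℕ := by
    rw [← Ultrafilter.compl_mem_iff_notMem]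
    have hcof : {k | n ≤ k} ∈ (hyperfilter ℕ : Filter ℕ) := by
      apply hyperfilter_le_cofinite
      rw [Nat.cofinite_eq_atTop]
      exact mem_atTop n
    apply Filter.congr_sets
    filter_upwards [hcof] with k hk
    simp [h, not_lt.2 hk]
  rintro (h1 | h1)
  · have a := h1 ⟨hyN, hn hyc⟩
    have b := h1 ⟨hyN2, hn hyc2⟩
    exact key.1 b a
  · have a := h1 ⟨hyN, hn hyc⟩
    have b := h1 ⟨hyN2, hn hyc2⟩
    exact b (key.2 a)

open Set Filter Topology in
lemma aux_split {K : Type*} [TopologicalSpace K] [CompactSpace K] [T2Space K] (S : Set K)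
    (hS : ∀ x ∈ S, ∀ U : Set K, IsOpen U → U ∩ S ≠ {x})
    (V : Set K) (hV : IsOpen V ∧ (V ∩ S).Nonempty) :
    ∃ W : Bool → Set K, (∀ b, (IsOpen (W b) ∧ (W b ∩ S).Nonempty) ∧ closure (W b) ⊆ V) ∧
      Disjoint (closure (W true)) (closure (W false)) := by
  obtain ⟨hVo, x, hxV, hxS⟩ := hV
  obtain ⟨y, ⟨hyV, hyS⟩, hyx⟩ : ∃ y ∈ V ∩ S, y ≠ x := by
    by_contra! hcon
    exact hS x hxS V hVo (Subset.antisymm hcon (by rintro _ rfl; exact ⟨hxV, hxS⟩))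
  obtain ⟨u, hxu, huo, v, hyv, hvo, huv⟩ := exists_open_nhds_disjoint_closure hyx
  have shr : ∀ z ∈ V, ∀ w : Set K, IsOpen w → z ∈ w →
      ∃ t, IsOpen t ∧ z ∈ t ∧ closure t ⊆ V ∧ closure t ⊆ closure w := by
    intro z hz w hw hzw
    obtain ⟨t, ht, htc, hts⟩ := exists_mem_nhds_isClosed_subset ((hVo.inter hw).mem_nhds ⟨hz, hzw⟩)
    have hct : closure (interior t) ⊆ t := closure_minimal interior_subset htc
    exact ⟨interior t, isOpen_interior, mem_interior_iff_mem_nhds.2 ht,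
      fun a ha => (hts (hct ha)).1, fun a ha => subset_closure (hts (hct ha)).2⟩
  obtain ⟨t1, h1o, h1m, h1V, h1u⟩ := shr y hyV u huo hxu
  obtain ⟨t2, h2o, h2m, h2V, h2v⟩ := shr x hxV v hvo hyv
  refine ⟨fun b => if b then t1 else t2, ?_, ?_⟩
  · rintro (_ | _)
    · exact ⟨⟨h2o, x, h2m, hxS⟩, h2V⟩
    · exact ⟨⟨h1o, y, h1m, hyS⟩, h1V⟩
  · exact huv.mono h1u h2v

open Set Filter Topology in
lemma aux_scheme {K : Type*} [TopologicalSpace K] [CompactSpace K] [T2Space K] (S : Set K)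
    (hSn : S.Nonempty) (hS : ∀ x ∈ S, ∀ U : Set K, IsOpen U → U ∩ S ≠ {x}) :
    ∃ V : List Bool → Set K, (∀ l, (V l ∩ S).Nonempty) ∧
      (∀ b l, closure (V (b :: l)) ⊆ V l) ∧
      (∀ l, Disjoint (closure (V (true :: l))) (closure (V (false :: l)))) := by
  choose W hW hD using fun V : {V : Set K // IsOpen V ∧ (V ∩ S).Nonempty} =>
    aux_split S hS V.1 V.2
  let V : List Bool → {V : Set K // IsOpen V ∧ (V ∩ S).Nonempty} := fun l =>
    List.rec ⟨univ, isOpen_univ, by simpa using hSn⟩ (fun b _ v => ⟨W v b, (hW v b).1⟩) l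
  exact ⟨fun l => (V l).1, fun l => (V l).2.2, fun b l => (hW (V l) b).2, fun l => hD (V l)⟩

/-- If every subset of a compact Hausdorff space `K` is Borel, then `K`
is scattered: every nonempty closed subset `S` has a point isolated in `S` (i.e. there is
an open set of `K` meeting `S` exactly in that point). -/
theorem scattered_of_every_subset_borel
    (K : Type*) [TopologicalSpace K] [CompactSpace K] [T2Space K]
    (hB : ∀ s : Set K, MeasurableSet[borel K] s) :
    ∀ S : Set K, S.Nonempty → IsClosed S →
      ∃ x ∈ S, ∃ U : Set K, IsOpen U ∧ U ∩ S = {x} := by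
  intro S hSn hSc
  by_contra! hS
  obtain ⟨V, hVn, hVs, hVd⟩ := aux_scheme S hSn hS
  let R : Set (K × (ℕ → Bool)) :=
    {p | p.1 ∈ S ∧ ∀ n, p.1 ∈ closure (V (PiNat.res p.2 n))}
  have hRc : IsClosed R := by
    rw [← isOpen_compl_iff, isOpen_iff_mem_nhds]
    rintro ⟨x, y⟩ hp
    by_cases hx : x ∈ S
    · obtain ⟨n, hn⟩ : ∃ n, x ∉ closure (V (PiNat.res y n)) := by
        by_contra! hcon
        exact hp ⟨hx, hcon⟩
      refine Filter.mem_of_superset (prod_mem_nhds (isClosed_closure.isOpen_compl.mem_nhds hn)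
        ((PiNat.isOpen_cylinder _ y n).mem_nhds (PiNat.self_mem_cylinder _ _))) ?_
      rintro ⟨x', y'⟩ ⟨h1, h2⟩ h3
      have h4 := h3.2 n
      rw [PiNat.cylinder_eq_res] at h2
      have h2' : PiNat.res y' n = PiNat.res y n := h2
      rw [h2'] at h4
      exact h1 h4
    · exact Filter.mem_of_superset ((hSc.isOpen_compl.preimage continuous_fst).mem_nhds hx)
        (fun q hq h3 => hq h3.1)
  have hinj : ∀ p ∈ R, ∀ q ∈ R, p.1 = q.1 → p.2 = q.2 := by
    rintro ⟨x, y⟩ hp ⟨x', z⟩ hq h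
    obtain rfl : x = x' := h
    apply PiNat.res_injective
    funext n
    induction n with
    | zero => rfl
    | succ n ih =>
      have h1 := hp.2 (n + 1)
      have h2 := hq.2 (n + 1)
      simp only [PiNat.res_succ] at h1 h2 ih ⊢
      rw [← ih] at h2 ⊢
      congr 1
      have hd := Set.disjoint_left.1 (hVd (PiNat.res y n))
      cases hy : y n <;> cases hz : z n <;> rw [hy] at h1 <;> rw [hz] at h2
      · exact (hd h2 h1).elim
      · exact (hd h1 h2).elim
  have : CompactSpace R := isCompact_iff_compactSpace.1 hRc.isCompact
  have hπs : Function.Surjective (fun p : R => p.1.2) := by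
    intro y
    obtain ⟨x, hx⟩ := IsCompact.nonempty_iInter_of_sequence_nonempty_isCompact_isClosed
      (fun n => closure (V (PiNat.res y n)) ∩ S)
      (fun n => Set.inter_subset_inter_left _ ((hVs _ _).trans subset_closure))
      (fun n => (hVn _).mono (Set.inter_subset_inter_left _ subset_closure))
      (isClosed_closure.inter hSc).isCompact (fun n => isClosed_closure.inter hSc)
    rw [Set.mem_iInter] at hx
    exact ⟨⟨(x, y), (hx 0).2, fun n => (hx n).1⟩, rfl⟩
  have hπc : Continuous (fun p : R => p.1.2) := continuous_snd.comp continuous_subtype_val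
  obtain ⟨E, hEc, hEs, hEm⟩ := exists_compact_surjective_zorn_subset
    (continuous_uliftUp.comp hπc) (ULift.up_surjective.comp hπs)
  obtain ⟨A, hA⟩ := aux_nonBaire
  let φ : E → (ℕ → Bool) := fun e => e.1.1.2
  have hφc : Continuous φ := hπc.comp continuous_subtype_val
  have hφs : Function.Surjective φ := by
    intro y
    obtain ⟨p, hp, h⟩ := (Set.ext_iff.1 hEs (ULift.up y)).2 (Set.mem_univ _)
    exact ⟨⟨p, hp⟩, congrArg ULift.down h⟩
  have hmeas : MeasurableSet[borel E] (φ ⁻¹' A) := by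
    have hψ : Continuous (fun e : E => e.1.1.1) :=
      continuous_fst.comp (continuous_subtype_val.comp continuous_subtype_val)
    have h1 := hψ.borel_measurable (hB ((fun e : E => e.1.1.1) '' (φ ⁻¹' A)))
    convert h1 using 1
    ext e
    constructor
    · exact fun he => ⟨e, he, rfl⟩
    · rintro ⟨e', he', h⟩
      have h5 : φ e' = φ e := hinj _ e'.1.2 _ e.1.2 h
      show φ e ∈ A
      rw [← h5]
      exact he'
  have hirr : ∀ E₀ : Set E, E₀ ≠ Set.univ → IsClosed E₀ → φ '' E₀ ≠ Set.univ := by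
    intro E₀ h1 h2 h3
    refine hEm E₀ h1 h2 (Set.eq_univ_of_forall ?_)
    rintro ⟨y⟩
    obtain ⟨e, he, h⟩ := (Set.ext_iff.1 h3 y).2 (Set.mem_univ _)
    exact ⟨e, he, congrArg ULift.up h⟩
  obtain ⟨O, hO, hOn, N, hN, h⟩ := aux_kern φ hφc hφc.isClosedMap hφs
    hirr A hmeas
  exact hA O hO hOn N hN h
end

section
/- Let K be a compact Hausdorff space and let K₀ = {δ_k : k ∈ K} ⊆ C*(K) be the set of evaluation (Dirac) functionals. Then K₀ is closed and discrete in C*(K) equipped with the weak topology; consequently every subset of K₀ belongs to the Borel σ-algebra that the weak topology of C*(K) induces on K₀, i.e. Bo(K₀, w) = P(K₀). -/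
open NormedSpace MeasureTheory Topology

lemma weak_eval_cont {E : Type*} [NormedAddCommGroup E] [NormedSpace ℝ E]
    (L : StrongDual ℝ E) : @Continuous E ℝ (weakTopology E) _ (fun x => L x) := by
  have h : Continuous fun g : StrongDual ℝ E → ℝ => g L := continuous_apply L
  have h2 : @Continuous E (StrongDual ℝ E → ℝ) (weakTopology E) _ (fun x Λ => Λ x) :=
    continuous_induced_dom
  exact @Continuous.comp _ _ _ (weakTopology E) _ _ _ (fun g : StrongDual ℝ E → ℝ => g L) h h2

lemma weak_eval_cont' {E : Type*} [NormedAddCommGroup E] [NormedSpace ℝ E] (f : E) :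
    @Continuous (StrongDual ℝ E) ℝ (weakTopology (StrongDual ℝ E)) _ (fun μ => μ f) :=
  weak_eval_cont (E := StrongDual ℝ E) (NormedSpace.inclusionInDoubleDual ℝ E f)

lemma span_vanish {K : Type*} [TopologicalSpace K] [T2Space K] [CompactSpace K] (k : K)
    (ν : StrongDual ℝ C(K, ℝ))
    (h : ν ∈ Submodule.span ℝ ((fun j : K => (ContinuousMap.evalCLM ℝ j : StrongDual ℝ C(K, ℝ))) '' {k}ᶜ)) :
    ∃ U : Set K, IsOpen U ∧ k ∈ U ∧ ∀ f : C(K, ℝ), (∀ x ∉ U, f x = 0) → ν f = 0 := by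
  induction h using Submodule.span_induction with
  | mem x hx =>
    obtain ⟨j, hj, rfl⟩ := hx
    refine ⟨{j}ᶜ, isOpen_compl_singleton, fun h => hj h.symm, fun f hf => ?_⟩
    exact hf j (by simp)
  | zero => exact ⟨Set.univ, isOpen_univ, trivial, fun f _ => rfl⟩
  | add x y _ _ hx hy =>
    obtain ⟨U, hU, hkU, h1⟩ := hx
    obtain ⟨V, hV, hkV, h2⟩ := hy
    refine ⟨U ∩ V, hU.inter hV, ⟨hkU, hkV⟩, fun f hf => ?_⟩
    have e1 := h1 f fun x hx => hf x fun h => hx h.1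
    have e2 := h2 f fun x hx => hf x fun h => hx h.2
    change x f + y f = 0
    rw [e1, e2, add_zero]
  | smul a x _ hx =>
    obtain ⟨U, hU, hkU, h1⟩ := hx
    refine ⟨U, hU, hkU, fun f hf => ?_⟩
    change a * x f = 0
    rw [h1 f hf, mul_zero]

lemma dist_span {K : Type*} [TopologicalSpace K] [T2Space K] [CompactSpace K] (k : K)
    (ν : StrongDual ℝ C(K, ℝ))
    (h : ν ∈ Submodule.span ℝ ((fun j : K => (ContinuousMap.evalCLM ℝ j : StrongDual ℝ C(K, ℝ))) '' {k}ᶜ)) :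
    1 ≤ ‖ν - (ContinuousMap.evalCLM ℝ k : StrongDual ℝ C(K, ℝ))‖ := by
  obtain ⟨U, hU, hk, hν⟩ := span_vanish k ν h
  obtain ⟨f, hf0, hf1, hf⟩ := exists_continuous_zero_one_of_isClosed hU.isClosed_compl
    (isClosed_singleton (x := k)) (by simpa using hk)
  have hn : ‖f‖ ≤ 1 := (ContinuousMap.norm_le _ zero_le_one).2 fun x => by
    rw [Real.norm_eq_abs, abs_of_nonneg (hf x).1]; exact (hf x).2
  have e0 : ν f = 0 := hν f fun x hx => hf0 hx
  have e1 : f k = 1 := hf1 rfl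
  have := (ν - (ContinuousMap.evalCLM ℝ k : StrongDual ℝ C(K, ℝ))).le_opNorm f
  have e2 : (ν - (ContinuousMap.evalCLM ℝ k : StrongDual ℝ C(K, ℝ))) f = -1 := by
    change ν f - f k = -1
    rw [e0, e1]; norm_num
  rw [e2, norm_neg, norm_one] at this
  nlinarith [norm_nonneg (ν - (ContinuousMap.evalCLM ℝ k : StrongDual ℝ C(K, ℝ)))]

lemma exists_sep {K : Type*} [TopologicalSpace K] [T2Space K] [CompactSpace K] (k : K) :
    ∃ (L : StrongDual ℝ (StrongDual ℝ C(K, ℝ))) (u : ℝ),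
      (∀ j, j ≠ k → L (ContinuousMap.evalCLM ℝ j : StrongDual ℝ C(K, ℝ)) < u) ∧
      u < L (ContinuousMap.evalCLM ℝ k : StrongDual ℝ C(K, ℝ)) := by
  let S := Submodule.span ℝ
    ((fun j : K => (ContinuousMap.evalCLM ℝ j : StrongDual ℝ C(K, ℝ))) '' {k}ᶜ)
  have hk : (ContinuousMap.evalCLM ℝ k : StrongDual ℝ C(K, ℝ)) ∉
      closure (S : Set (StrongDual ℝ C(K, ℝ))) := by
    intro h
    obtain ⟨ν, hν, hlt⟩ := (Metric.mem_closure_iff (α := StrongDual ℝ C(K, ℝ))).1 h 1 one_pos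
    have := dist_span k ν hν
    rw [dist_comm] at hlt
    replace hlt : ‖ν - (ContinuousMap.evalCLM ℝ k : StrongDual ℝ C(K, ℝ))‖ < 1 :=
      lt_of_eq_of_lt (dist_eq_norm (E := StrongDual ℝ C(K, ℝ)) _ _).symm hlt
    linarith
  obtain ⟨L, u, h1, h2⟩ := geometric_hahn_banach_closed_point (S.convex.closure)
    isClosed_closure hk
  exact ⟨L, u, fun j hj => h1 _ (subset_closure (Submodule.subset_span ⟨j, hj, rfl⟩)), h2⟩

/-- For a compact Hausdorff space `K`, the set `K₀` of Dirac (evaluation)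
functionals is closed and discrete in `C*(K)` with the weak topology; consequently every
subset of `K₀` belongs to the Borel σ-algebra that the weak topology induces on `K₀`. -/
theorem diracSet_closed_discrete_and_all_subsets_borel
    (K : Type*) [TopologicalSpace K] [CompactSpace K] [T2Space K] :
    let w : TopologicalSpace (StrongDual ℝ C(K, ℝ)) := weakTopology (StrongDual ℝ C(K, ℝ))
    let K₀ : Set (StrongDual ℝ C(K, ℝ)) := Set.range fun k : K => ContinuousMap.evalCLM ℝ k
    IsClosed[w] K₀ ∧
      (∀ μ ∈ K₀, ∃ U : Set (StrongDual ℝ C(K, ℝ)), IsOpen[w] U ∧ U ∩ K₀ = {μ}) ∧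
      ∀ s : Set K₀, MeasurableSet[@borel K₀ (w.induced Subtype.val)] s := by
  intro w K₀
  have hd : ∀ μ ∈ K₀, ∃ U : Set (StrongDual ℝ C(K, ℝ)), IsOpen[w] U ∧ U ∩ K₀ = {μ} := by
    rintro _ ⟨k, rfl⟩
    obtain ⟨L, u, h1, h2⟩ := exists_sep k
    refine ⟨(fun x => L x) ⁻¹' Set.Ioi u, ?_, ?_⟩
    · exact @IsOpen.preimage _ _ w _ _ (weak_eval_cont L) _ isOpen_Ioi
    · ext μ
      constructor
      · rintro ⟨hu, j, rfl⟩
        by_cases hj : j = k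
        · rw [hj]; rfl
        · exact absurd (h1 j hj) (not_lt.2 (le_of_lt hu))
      · rintro rfl
        exact ⟨h2, k, rfl⟩
  refine ⟨?_, hd, ?_⟩
  · let e : StrongDual ℝ C(K, ℝ) → (C(K, ℝ) → ℝ) := fun μ f => μ f
    have he : @Continuous _ _ w _ e := by
      refine @continuous_pi _ _ _ w _ _ fun f => ?_
      exact weak_eval_cont' f
    have hc : IsClosed (Set.range fun (k : K) (f : C(K, ℝ)) => f k) :=
      (isCompact_range (continuous_pi fun f => f.continuous)).isClosed
    have hp : K₀ = e ⁻¹' (Set.range fun (k : K) (f : C(K, ℝ)) => f k) := by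
      ext μ
      constructor
      · rintro ⟨k, rfl⟩
        exact ⟨k, rfl⟩
      · rintro ⟨k, hk⟩
        exact ⟨k, ContinuousLinearMap.ext fun f => congrFun hk f⟩
    rw [hp]
    exact @IsClosed.preimage _ _ w _ _ he _ hc
  · intro s
    apply MeasurableSpace.measurableSet_generateFrom
    choose! V hV hVK using hd
    refine ⟨⋃ μ ∈ s, V μ, ?_, ?_⟩
    · exact @isOpen_biUnion _ _ w _ _ fun μ _ => hV _ μ.2
    · ext x
      simp only [Set.mem_preimage, Set.mem_iUnion]
      constructor
      · rintro ⟨μ, hμ, hx⟩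
        have : (x : StrongDual ℝ C(K, ℝ)) ∈ V μ ∩ K₀ := ⟨hx, x.2⟩
        rw [hVK _ μ.2] at this
        rwa [Subtype.ext this]
      · intro hx
        have : (x : StrongDual ℝ C(K, ℝ)) ∈ V x ∩ K₀ := by rw [hVK _ x.2]; rfl
        exact ⟨x, hx, this.1⟩
end

section
/- Let K be a compact Hausdorff space. If every subset of K is a Borel set, then the Borel σ-algebra generated by the weak topology on C*(K) coincides with the Borel σ-algebra generated by the dual norm topology on C*(K), i.e. Bo(C*(K), w) = Bo(C*(K), ‖·‖). -/
open NormedSpace MeasureTheory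

open scoped Topology

universe u

open Cardinal in
theorem aux_transversal {ι : Type u} {Y : Type u} (S : ι → Set Y)
    (h : ∀ i, #ι ≤ #(S i)) : ∃ g : ι → Y, Function.Injective g ∧ ∀ i, g i ∈ S i := by
  classical
  obtain ⟨r, hr, ho⟩ := Cardinal.exists_ord_eq ι
  have key : ∀ (i : ι) (f : ∀ j, r j i → Y), ∃ y, y ∈ S i ∧ ∀ j hj, f j hj ≠ y := by
    intro i f
    by_contra hcon
    push Not at hcon
    have hsub : S i ⊆ Set.range (fun j : {j // r j i} => f j.1 j.2) := by
      intro y hy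
      obtain ⟨j, hj, e⟩ := hcon y hy
      exact ⟨⟨j, hj⟩, e⟩
    have h1 : #(S i) ≤ #{j // r j i} := (Cardinal.mk_le_mk_of_subset hsub).trans Cardinal.mk_range_le
    have h2 : #{j // r j i} < #ι := Cardinal.card_typein_lt i ho
    exact absurd (h i) (not_le.2 (h1.trans_lt h2))
  choose F hF1 hF2 using key
  let g : ι → Y := hr.wf.fix F
  have hg : ∀ i, g i = F i (fun j _ => g j) := fun i => hr.wf.fix_eq F i
  refine ⟨g, ?_, fun i => by rw [hg]; exact hF1 _ _⟩
  intro i j hij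
  rcases trichotomous_of r i j with h | h | h
  · exfalso
    rw [hg j] at hij
    exact hF2 j (fun j _ => g j) i h hij
  · exact h
  · exfalso
    rw [hg i] at hij
    exact hF2 i (fun j _ => g j) j h hij.symm

open Cardinal in
theorem aux_bernstein (Y : Type u) [TopologicalSpace Y] [PolishSpace Y] :
    ∃ B : Set Y, ∀ C : Set Y, IsClosed C → (C ⊆ B ∨ C ⊆ Bᶜ) → C.Countable := by
  let I := {C : Set Y // IsClosed C ∧ ¬ C.Countable}
  have hI : #I ≤ 𝔠 := by
    have hc := MeasurableSpace.cardinal_measurableSet_le_continuum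
      (s := TopologicalSpace.countableBasis Y)
      ((Cardinal.le_aleph0_iff_set_countable.2
        (TopologicalSpace.countable_countableBasis Y)).trans Cardinal.aleph0_le_continuum)
    refine le_trans (Cardinal.mk_le_mk_of_subset ?_ : #({C : Set Y | IsClosed C ∧ ¬ C.Countable}) ≤ _) hc
    intro C hC
    rw [Set.mem_ofPred_eq]
    rw [← (TopologicalSpace.isBasis_countableBasis Y).borel_eq_generateFrom]
    borelize Y
    exact hC.1.measurableSet
  have hS : ∀ i : I, 𝔠 ≤ #(i.1) := by
    rintro ⟨C, hC, hC'⟩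
    obtain ⟨f, hf, -, hinj⟩ := hC.exists_nat_bool_injection_of_not_countable hC'
    have := Cardinal.lift_mk_le_lift_mk_of_injective
      (f := fun x => (⟨f x, hf ⟨x, rfl⟩⟩ : C)) (fun a b hab => hinj (by simpa using hab))
    simpa using this
  have hIB : #(I × ULift.{u} Bool) ≤ 𝔠 := by
    rw [Cardinal.mk_prod]
    simp only [Cardinal.lift_id]
    refine Cardinal.mul_le_of_le aleph0_le_continuum hI ?_
    exact (Cardinal.lt_aleph0_of_finite _).le.trans aleph0_le_continuum
  obtain ⟨g, hg, hgS⟩ := aux_transversal (fun p : I × ULift.{u} Bool => p.1.1)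
    (fun p => hIB.trans (hS p.1))
  refine ⟨Set.range fun i : I => g (i, ⟨true⟩), fun C hC hor => ?_⟩
  by_contra hunc
  rcases hor with h | h
  · obtain ⟨j, hj⟩ := h (hgS (⟨C, hC, hunc⟩, ⟨false⟩))
    have := hg hj
    simp at this
  · exact h (hgS (⟨C, hC, hunc⟩, ⟨true⟩)) ⟨_, rfl⟩

theorem aux_atomless {K : Type u} [TopologicalSpace K] [CompactSpace K] [T2Space K]
    [MeasurableSpace K] [BorelSpace K] (hB : ∀ s : Set K, MeasurableSet s)
    (ν : Measure K) [IsFiniteMeasure ν] [ν.Regular] (hν : ∀ x, ν {x} = 0) : ν = 0 := by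
  have h1 : ∀ (n : ℕ) (x : K), ∃ f : C(K, ℝ), f x = 1 ∧ ν {y | f y ≠ 0} < (n + 1 : ENNReal)⁻¹ := by
    intro n x
    obtain ⟨U, hxU, hU, hlt⟩ := Set.exists_isOpen_lt_of_lt ({x} : Set K) (μ := ν)
      ((n + 1 : ENNReal)⁻¹) (by rw [hν]; simp)
    obtain ⟨f, h0, h1, -⟩ := exists_continuous_zero_one_of_isClosed hU.isClosed_compl
      (isClosed_singleton (x := x)) (by
        rw [Set.disjoint_singleton_right]; simpa using hxU)
    refine ⟨f, h1 rfl, lt_of_le_of_lt (measure_mono ?_) hlt⟩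
    intro y hy
    by_contra hyU
    exact hy (h0 hyU)
  choose f hf1 hf2 using h1
  have h2 : ∀ n, ∃ t : Finset K, ∀ y, ∃ x ∈ t, f n x y ≠ 0 := by
    intro n
    obtain ⟨t, ht⟩ := isCompact_univ.elim_finite_subcover (fun x => {y | f n x y ≠ 0})
      (fun x => isOpen_ne_fun (f n x).continuous continuous_const)
      (fun y _ => Set.mem_iUnion.2 ⟨y, by simp [hf1]⟩)
    refine ⟨t, fun y => ?_⟩
    simpa using ht (Set.mem_univ y)
  choose t ht using h2
  let F : K → ((Σ n : ℕ, t n) → ℝ) := fun y p => f p.1 p.2 y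
  have hFc : Continuous F := continuous_pi fun p => (f p.1 p.2).continuous
  have hfib : ∀ z, ν (F ⁻¹' {z}) = 0 := by
    intro z
    by_contra hne
    obtain ⟨y, hy⟩ : (F ⁻¹' {z}).Nonempty := by
      rw [Set.nonempty_iff_ne_empty]; rintro h; simp [h] at hne
    obtain ⟨n, hn⟩ := ENNReal.exists_inv_nat_lt hne
    obtain ⟨x, hx, hxy⟩ := ht n y
    have hsub : F ⁻¹' {z} ⊆ {y | f n x y ≠ 0} := by
      intro w hw
      have : F w = F y := by rw [Set.mem_preimage, Set.mem_singleton_iff] at hw hy; rw [hw, hy]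
      have := congrFun this ⟨n, ⟨x, hx⟩⟩
      simp only [F] at this
      simp only [Set.mem_ofPred_eq, this]; exact hxy
    have h3 := (measure_mono hsub).trans_lt (hf2 n x)
    have h4 : (n + 1 : ENNReal)⁻¹ ≤ (n : ENNReal)⁻¹ := ENNReal.inv_le_inv.2 le_self_add
    exact absurd (hn.trans h3) (not_lt.2 h4)
  obtain ⟨B, hBB⟩ := aux_bernstein ((Σ n : ℕ, t n) → ℝ)
  have key : ∀ D : Set ((Σ n : ℕ, t n) → ℝ), (D = B ∨ D = Bᶜ) → ν (F ⁻¹' D) = 0 := by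
    intro D hD
    by_contra hne
    obtain ⟨C, hCs, hC, hpos⟩ := (hB (F ⁻¹' D)).exists_lt_isCompact_of_ne_top
      (μ := ν) (measure_ne_top _ _) (pos_iff_ne_zero.2 hne)
    have hcount : (F '' C).Countable := by
      refine hBB _ (hC.image hFc).isClosed ?_
      have : F '' C ⊆ D := Set.image_subset_iff.2 hCs
      rcases hD with rfl | rfl
      · exact Or.inl this
      · exact Or.inr this
    have : ν (⋃ z ∈ F '' C, F ⁻¹' {z}) = 0 := (measure_biUnion_null_iff hcount).2 fun z _ => hfib z
    have h5 : ν C ≤ ν (⋃ z ∈ F '' C, F ⁻¹' {z}) := measure_mono fun x hx => by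
      simp only [Set.mem_iUnion]
      exact ⟨F x, ⟨x, hx, rfl⟩, rfl⟩
    rw [this] at h5
    exact absurd hpos (not_lt.2 h5)
  rw [← Measure.measure_univ_eq_zero, ← Set.union_compl_self (F ⁻¹' B)]
  exact measure_union_null (key B (Or.inl rfl)) (key Bᶜ (Or.inr rfl))

theorem aux_atomic {K : Type u} [TopologicalSpace K] [CompactSpace K] [T2Space K]
    [MeasurableSpace K] [BorelSpace K] (hB : ∀ s : Set K, MeasurableSet s)
    (μ : Measure K) [IsFiniteMeasure μ] [μ.Regular] :
    ∃ a : K → ℝ, Summable (fun x => |a x|) ∧ ∀ f : C(K, ℝ), ∫ x, f x ∂μ = ∑' x, a x * f x := by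
  have hfin : ∑' x, μ {x} ≠ ⊤ := by
    refine ne_top_of_le_ne_top (measure_ne_top μ (⋃ x, {x})) ?_
    refine tsum_meas_le_meas_iUnion_of_disjoint μ (fun x => hB _) ?_
    intro x y hxy
    simpa [Function.onFun] using hxy
  let A : Set K := Function.support fun x => μ {x}
  have hA : A.Countable := Summable.countable_support_ennreal hfin
  have hν : μ.restrict Aᶜ = 0 := by
    have : (μ.restrict Aᶜ).Regular := Measure.Regular.restrict_of_measure_ne_top (measure_ne_top _ _)
    refine aux_atomless hB _ fun x => ?_
    rw [Measure.restrict_apply (hB _)]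
    by_cases hx : x ∈ A
    · have : ({x} : Set K) ∩ Aᶜ = ∅ := by
        ext y; simp only [Set.mem_inter_iff, Set.mem_singleton_iff, Set.mem_empty_iff_false, iff_false]
        rintro ⟨rfl, h⟩; exact h hx
      rw [this, measure_empty]
    · exact measure_mono_null Set.inter_subset_left (by simpa [A] using hx)
  refine ⟨fun x => μ.real {x}, ?_, fun f => ?_⟩
  · simpa [abs_of_nonneg, Measure.real] using ENNReal.summable_toReal hfin
  have hmu : μ = Measure.sum fun x : A => μ {x.1} • Measure.dirac x.1 := by
    conv_lhs => rw [← Measure.restrict_add_restrict_compl (μ := μ) (hB A), hν, add_zero]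
    ext s hs
    have := hA.to_subtype
    rw [Measure.restrict_apply hs, Measure.sum_apply _ hs,
      ← Set.biUnion_of_singleton (s ∩ A), measure_biUnion (hA.mono Set.inter_subset_right) 
        (by intro x _ y _ hxy; simpa [Function.onFun] using hxy) (fun _ _ => hB _)]
    rw [tsum_subtype (s ∩ A) (fun x => μ {x}), tsum_subtype A (fun x => (μ {x} • Measure.dirac x) s)]
    congr 1 with x
    by_cases h1 : x ∈ A <;> by_cases h2 : x ∈ s <;> simp [h1, h2, hs]
  have hint : Integrable f μ := f.continuous.integrable_of_hasCompactSupport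
    (HasCompactSupport.of_compactSpace _)
  have hint' := hint
  rw [hmu] at hint'
  conv_lhs => rw [hmu]
  rw [integral_sum_measure hint']
  have : ∀ x : A, ∫ y, f y ∂(μ {x.1} • Measure.dirac x.1) = μ.real {x.1} * f x.1 := by
    intro x
    rw [integral_smul_measure, integral_dirac, smul_eq_mul, Measure.real]
  simp_rw [this]
  rw [tsum_subtype A (fun x => μ.real {x} * f x)]
  congr 1 with x
  by_cases hx : x ∈ A
  · simp [hx]
  · have : μ {x} = 0 := by simpa [A] using hx
    simp [hx, Measure.real, this]

open CompactlySupported CompactlySupportedContinuousMap in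
theorem aux_variation {K : Type u} [TopologicalSpace K] [CompactSpace K] [T2Space K]
    (φ : StrongDual ℝ C(K, ℝ)) :
    ∃ Λ : C_c(K, ℝ) →ₚ[ℝ] ℝ, ∀ f : C_c(K, ℝ), 0 ≤ f → -φ f.toContinuousMap ≤ Λ f := by
  classical
  let S : C_c(K, NNReal) → Set ℝ := fun f => {r | ∃ g : C(K, ℝ), (∀ x, |g x| ≤ f x) ∧ φ g = r}
  have hne : ∀ f, (S f).Nonempty := fun f => ⟨φ 0, 0, fun x => by simp, rfl⟩
  have hbdd : ∀ f, BddAbove (S f) := by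
    intro f
    refine ⟨‖φ‖ * ‖f.toReal.toContinuousMap‖, ?_⟩
    rintro r ⟨g, hg, rfl⟩
    refine (le_abs_self _).trans ((φ.le_opNorm g).trans ?_)
    refine mul_le_mul_of_nonneg_left ?_ (norm_nonneg _)
    rw [ContinuousMap.norm_le _ (norm_nonneg _)]
    intro x
    refine (hg x).trans ?_
    have h := (le_abs_self _).trans (f.toReal.toContinuousMap.norm_coe_le_norm x)
    have e : f.toReal.toContinuousMap x = f x := toReal_apply f x
    rwa [e] at h
  let q : C_c(K, NNReal) → ℝ := fun f => sSup (S f)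
  have hle : ∀ f (g : C(K, ℝ)), (∀ x, |g x| ≤ f x) → φ g ≤ q f :=
    fun f g hg => le_csSup (hbdd f) ⟨g, hg, rfl⟩
  have hq0 : ∀ f, 0 ≤ q f := fun f => by simpa using hle f 0 (fun x => by simp)
  have hlub : ∀ f c, (∀ g : C(K, ℝ), (∀ x, |g x| ≤ f x) → φ g ≤ c) → q f ≤ c := by
    intro f c h
    refine csSup_le (hne f) ?_
    rintro r ⟨g, hg, rfl⟩
    exact h g hg
  have hadd : ∀ f₁ f₂, q (f₁ + f₂) = q f₁ + q f₂ := by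
    intro f₁ f₂
    apply le_antisymm
    · refine hlub _ _ fun g hg => ?_
      let F : C(K, ℝ) := f₁.toReal.toContinuousMap
      have hF : ∀ x, F x = f₁ x := fun x => toReal_apply f₁ x
      let g₁ : C(K, ℝ) := ⟨fun x => max (-F x) (min (g x) (F x)), by fun_prop⟩
      have e : φ g = φ g₁ + φ (g - g₁) := by rw [← map_add]; congr 1; abel
      rw [e]
      refine add_le_add (hle _ _ fun x => ?_) (hle _ _ fun x => ?_)
      · have h1 : (0:ℝ) ≤ f₁ x := (f₁ x).2
        change |max (-F x) (min (g x) (F x))| ≤ _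
        rw [hF, abs_le]
        constructor
        · exact le_max_left _ _
        · exact max_le (by linarith) (min_le_right _ _)
      · have h1 : (0:ℝ) ≤ f₁ x := (f₁ x).2
        have h2 : (0:ℝ) ≤ f₂ x := (f₂ x).2
        have h3 := hg x
        change |g x - max (-F x) (min (g x) (F x))| ≤ _
        rw [hF]
        simp only [CompactlySupportedContinuousMap.coe_add, Pi.add_apply, NNReal.coe_add] at h3
        rw [abs_le] at h3 ⊢
        rcases max_cases (-(f₁ x : ℝ)) (min (g x) (f₁ x)) with h | h <;>
        rcases min_cases (g x) (f₁ x : ℝ) with h' | h' <;> constructor <;> linarith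
    · have : ∀ g₂ : C(K, ℝ), (∀ x, |g₂ x| ≤ f₂ x) → q f₁ ≤ q (f₁ + f₂) - φ g₂ := by
        intro g₂ h2
        refine hlub _ _ fun g₁ h1 => ?_
        have := hle (f₁ + f₂) (g₁ + g₂) fun x => by
          simp only [CompactlySupportedContinuousMap.coe_add, Pi.add_apply, NNReal.coe_add,
            ContinuousMap.add_apply]
          exact (abs_add_le _ _).trans (add_le_add (h1 x) (h2 x))
        rw [map_add] at this
        linarith
      have h3 : q f₂ ≤ q (f₁ + f₂) - q f₁ := hlub _ _ fun g hg => by linarith [this g hg]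
      linarith
  have hsm : ∀ (c : NNReal) f, (c : ℝ) * q f ≤ q (c • f) := by
    intro c f
    rcases eq_or_lt_of_le c.2 with h | h
    · have : (c : ℝ) = 0 := h.symm
      rw [this, zero_mul]; exact hq0 _
    · have h : (0:ℝ) < c := h
      rw [← le_div_iff₀' h]
      refine hlub _ _ fun g hg => ?_
      rw [le_div_iff₀' h]
      have := hle (c • f) ((c : ℝ) • g) fun x => by
        simp only [ContinuousMap.smul_apply, smul_eq_mul, abs_mul,
          CompactlySupportedContinuousMap.smul_apply, NNReal.coe_mul, NNReal.abs_eq]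
        exact mul_le_mul_of_nonneg_left (hg x) c.2
      simpa using this
  have hsmul : ∀ (c : NNReal) f, q (c • f) = (c : ℝ) * q f := by
    intro c f
    refine le_antisymm ?_ (hsm c f)
    by_cases hc : c = 0
    · subst hc
      refine hlub _ _ fun g hg => ?_
      have : g = 0 := by
        ext x; simpa using hg x
      simp [this]
    · have := hsm c⁻¹ (c • f)
      rw [smul_smul, inv_mul_cancel₀ hc, one_smul] at this
      have hc' : (0:ℝ) < c := by exact_mod_cast pos_iff_ne_zero.2 hc
      rw [NNReal.coe_inv, inv_mul_le_iff₀ hc'] at this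
      exact this
  let L : C_c(K, NNReal) →ₗ[NNReal] NNReal :=
    { toFun := fun f => ⟨q f, hq0 f⟩
      map_add' := fun f g => NNReal.eq (hadd f g)
      map_smul' := fun c f => NNReal.eq (hsmul c f) }
  refine ⟨toRealPositiveLinear L, fun f hf => ?_⟩
  have e : f = toReal (nnrealPart f) := by
    ext x
    have : 0 ≤ f x := hf x
    simp [this]
  have e2 : toRealPositiveLinear L f = q (nnrealPart f) := by
    conv_lhs => rw [e]
    rw [eq_toRealPositiveLinear_toReal]
    rfl
  rw [e2, ← map_neg]
  refine hle _ _ fun x => ?_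
  have : 0 ≤ f x := hf x
  simp [abs_of_nonneg this, this]

open CompactlySupported CompactlySupportedContinuousMap in
theorem aux_repr {K : Type u} [TopologicalSpace K] [CompactSpace K] [T2Space K]
    (hB : ∀ s : Set K, MeasurableSet[borel K] s) (φ : StrongDual ℝ C(K, ℝ)) :
    ∃ a : K → ℝ, Summable (fun x => |a x|) ∧ ∀ f : C(K, ℝ), φ f = ∑' x, a x * f x := by
  borelize K
  obtain ⟨Λ, hΛ⟩ := aux_variation φ
  let Λ' : C_c(K, ℝ) →ₚ[ℝ] ℝ := PositiveLinearMap.mk₀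
    { toFun := fun f => Λ f + φ f.toContinuousMap
      map_add' := fun f g => by
        have : (f + g).toContinuousMap = f.toContinuousMap + g.toContinuousMap := rfl
        rw [this, map_add, map_add]; ring
      map_smul' := fun c f => by
        have : (c • f).toContinuousMap = c • f.toContinuousMap := rfl
        rw [this, map_smul, map_smul]; simp [mul_add] }
    (fun f hf => by have := hΛ f hf; simp only [LinearMap.coe_mk, AddHom.coe_mk]; linarith)
  obtain ⟨a, ha, ha'⟩ := aux_atomic hB (RealRMK.rieszMeasure Λ)
  obtain ⟨b, hb, hb'⟩ := aux_atomic hB (RealRMK.rieszMeasure Λ')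
  refine ⟨fun x => b x - a x, ?_, fun f => ?_⟩
  · exact Summable.of_nonneg_of_le (fun _ => abs_nonneg _) (fun x => abs_sub _ _) (hb.add ha)
  · let F : C_c(K, ℝ) := continuousMapEquiv f
    have h1 : Λ F = ∑' x, a x * f x := (RealRMK.integral_rieszMeasure Λ F).symm.trans (ha' f)
    have h2 : Λ F + φ f = ∑' x, b x * f x := (RealRMK.integral_rieszMeasure Λ' F).symm.trans (hb' f)
    have hs : ∀ c : K → ℝ, Summable (fun x => |c x|) → Summable fun x => c x * f x := by
      intro c hc
      refine Summable.of_norm_bounded (hc.mul_right ‖f‖) fun x => ?_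
      rw [norm_mul]
      exact mul_le_mul_of_nonneg_left (f.norm_coe_le_norm x) (abs_nonneg _)
    simp_rw [sub_mul]
    rw [(hs b hb).tsum_sub (hs a ha)]
    linarith

theorem aux_norm_lp {K : Type u} (a : lp (fun _ : K => ℝ) 1) : HasSum (fun x => |a x|) ‖a‖ := by
  simpa using lp.hasSum_norm (p := 1) (by simp) a

theorem aux_summable {K : Type u} [TopologicalSpace K] [CompactSpace K]
    (a : lp (fun _ : K => ℝ) 1) (f : C(K, ℝ)) :
    Summable fun x => a x * f x := by
  refine Summable.of_norm_bounded ((aux_norm_lp a).summable.mul_right ‖f‖) fun x => ?_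
  rw [norm_mul]
  exact mul_le_mul_of_nonneg_left (f.norm_coe_le_norm x) (abs_nonneg _)

theorem aux_bound {K : Type u} [TopologicalSpace K] [CompactSpace K]
    (a : lp (fun _ : K => ℝ) 1) (f : C(K, ℝ)) :
    ‖∑' x, a x * f x‖ ≤ ‖a‖ * ‖f‖ := by
  refine tsum_of_norm_bounded ((aux_norm_lp a).mul_right ‖f‖) fun x => ?_
  rw [norm_mul]
  exact mul_le_mul_of_nonneg_left (f.norm_coe_le_norm x) (abs_nonneg _)

theorem aux_isom {K : Type u} [TopologicalSpace K] [CompactSpace K] [T2Space K] :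
    ∃ T : lp (fun _ : K => ℝ) 1 →ₗᵢ[ℝ] StrongDual ℝ C(K, ℝ),
      ∀ a f, T a f = ∑' x, a x * f x := by
  let T0 : lp (fun _ : K => ℝ) 1 → StrongDual ℝ C(K, ℝ) := fun a =>
    LinearMap.mkContinuous
      { toFun := fun f => ∑' x, a x * f x
        map_add' := fun f g => by
          rw [← (aux_summable a f).tsum_add (aux_summable a g)]
          simp [mul_add]
        map_smul' := fun c f => by
          simp only [RingHom.id_apply, smul_eq_mul, ← tsum_mul_left]
          congr 1 with x
          simp; ring } ‖a‖ (fun f => aux_bound a f)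
  have hT0 : ∀ a f, T0 a f = ∑' x, a x * f x := fun a f => rfl
  refine ⟨⟨{ toFun := T0, map_add' := fun a b => ?_, map_smul' := fun c a => ?_ }, fun a => ?_⟩,
    hT0⟩
  · ext f
    rw [add_apply, hT0, hT0, hT0,
      ← (aux_summable a f).tsum_add (aux_summable b f)]
    simp [add_mul]
  · ext f
    simp only [RingHom.id_apply, smul_apply, smul_eq_mul, hT0, ← tsum_mul_left]
    congr 1 with x
    simp; ring
  · change ‖T0 a‖ = ‖a‖
    apply le_antisymm (LinearMap.mkContinuous_norm_le _ (norm_nonneg _) _)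
    have hs := aux_norm_lp a
    refine le_of_forall_pos_le_add fun ε hε => ?_
    obtain ⟨F, hF⟩ : ∃ F : Finset K, ‖a‖ - ε / 2 < ∑ x ∈ F, |a x| :=
      (hs.eventually_const_lt (by linarith : ‖a‖ - ε / 2 < ‖a‖)).exists
    obtain ⟨u, hu0, hu1, hu⟩ := exists_continuous_zero_one_of_isClosed
      (s := {x | x ∈ F ∧ a x < 0}) (t := {x | x ∈ F ∧ 0 ≤ a x})
      ((F.finite_toSet.subset fun x hx => hx.1).isClosed)
      ((F.finite_toSet.subset fun x hx => hx.1).isClosed)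
      (Set.disjoint_left.2 fun x hx hy => absurd hx.2 (not_lt.2 hy.2))
    let f : C(K, ℝ) := (2 : ℝ) • u - 1
    have hfx : ∀ x, f x = 2 * u x - 1 := fun x => rfl
    have hf1 : ∀ x, |f x| ≤ 1 := fun x => by
      have := hu x
      rw [hfx, abs_le]; constructor <;> linarith [this.1, this.2]
    have hfn : ‖f‖ ≤ 1 := (ContinuousMap.norm_le _ zero_le_one).2 hf1
    have hfF : ∀ x ∈ F, a x * f x = |a x| := by
      intro x hx
      rcases lt_or_ge (a x) 0 with h | h
      · rw [hfx, hu0 ⟨hx, h⟩, abs_of_neg h]; simp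
      · rw [hfx, hu1 ⟨hx, h⟩, abs_of_nonneg h]; norm_num
    have h1 : T0 a f ≤ ‖T0 a‖ := by
      refine (le_abs_self _).trans (((T0 a).le_opNorm f).trans ?_)
      exact mul_le_of_le_one_right (norm_nonneg _) hfn
    -- sum of |a x| + a x f x ≥ 2 * sum on F
    have h2 : HasSum (fun x => |a x| + a x * f x) (‖a‖ + T0 a f) :=
      hs.add (aux_summable a f).hasSum
    have h3 : ∑ x ∈ F, (|a x| + a x * f x) ≤ ‖a‖ + T0 a f := by
      refine sum_le_hasSum F (fun x _ => ?_) h2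
      have : |a x * f x| ≤ |a x| := by
        rw [abs_mul]; exact mul_le_of_le_one_right (abs_nonneg _) (hf1 x)
      linarith [neg_abs_le (a x * f x)]
    have h4 : ∑ x ∈ F, (|a x| + a x * f x) = 2 * ∑ x ∈ F, |a x| := by
      rw [Finset.mul_sum]
      refine Finset.sum_congr rfl fun x hx => ?_
      rw [hfF x hx]; ring
    linarith

theorem aux_kadec {K : Type u} (a : lp (fun _ : K => ℝ) 1) (ε : ℝ) (hε : 0 < ε) :
    ∃ F : Finset K, ∃ δ > 0, ∀ b : lp (fun _ : K => ℝ) 1, ‖b‖ ≤ ‖a‖ + δ →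
      (∀ x ∈ F, |b x - a x| < δ) → ‖b - a‖ < ε := by
  have hs := aux_norm_lp a
  obtain ⟨F, hF⟩ : ∃ F : Finset K, ‖a‖ - ε / 8 < ∑ x ∈ F, |a x| :=
    (hs.eventually_const_lt (by linarith : ‖a‖ - ε / 8 < ‖a‖)).exists
  have hc : (0:ℝ) < F.card + 1 := by positivity
  refine ⟨F, ε / 8 / (F.card + 1), by positivity, fun b hb hbx => ?_⟩
  set δ := ε / 8 / (F.card + 1) with hδ
  have hδ0 : 0 < δ := by positivity
  have hδF : (F.card + 1) * δ = ε / 8 := by rw [hδ]; field_simp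
  have hδ1 : δ ≤ ε / 8 := by
    have : 0 ≤ F.card * δ := by positivity
    linarith
  have hsb := aux_norm_lp b
  have hsd := aux_norm_lp (b - a)
  -- |b-a| + ... : sum of |a|+|b|-|b-a| is nonneg; on F it is ≥ 2|a| - 2|b-a|
  have h2 : HasSum (fun x => |a x| + |b x| - |(b - a : lp (fun _ : K => ℝ) 1) x|)
      (‖a‖ + ‖b‖ - ‖b - a‖) := (hs.add hsb).sub hsd
  have hsub : ∀ x, (b - a : lp (fun _ : K => ℝ) 1) x = b x - a x := fun x => rfl
  have h3 := sum_le_hasSum F (fun x _ => by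
    rw [hsub]; linarith [abs_sub (b x) (a x)]) h2
  have h4 : ∑ x ∈ F, (2 * |a x| - 2 * δ) ≤
      ∑ x ∈ F, (|a x| + |b x| - |(b - a : lp (fun _ : K => ℝ) 1) x|) := by
    refine Finset.sum_le_sum fun x hx => ?_
    rw [hsub]
    have h5 := hbx x hx
    have h6 := abs_sub_abs_le_abs_sub (a x) (b x)
    rw [abs_sub_comm] at h6
    linarith
  rw [Finset.sum_sub_distrib, ← Finset.mul_sum, Finset.sum_const, nsmul_eq_mul] at h4
  nlinarith

/-- If every subset of a compact Hausdorff space `K` is Borel, then the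
weak Borel σ-algebra of `C*(K)` coincides with the norm Borel σ-algebra. -/
theorem weak_borel_eq_norm_borel_of_every_subset_borel
    (K : Type*) [TopologicalSpace K] [CompactSpace K] [T2Space K]
    (hB : ∀ s : Set K, MeasurableSet[borel K] s) :
    @borel (StrongDual ℝ C(K, ℝ)) (weakTopology (StrongDual ℝ C(K, ℝ))) = borel (StrongDual ℝ C(K, ℝ)) := by
  obtain ⟨T, hT⟩ := aux_isom (K := K)
  have hsurj : Function.Surjective T := by
    intro φ
    obtain ⟨a, ha, hφ⟩ := aux_repr hB φ
    have hmem : Memℓp a 1 := memℓp_gen (by simpa using ha)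
    refine ⟨⟨a, hmem⟩, ?_⟩
    ext f
    rw [hT, hφ]
  let e := LinearIsometryEquiv.ofSurjective T hsurj
  have hcont : ∀ Λ : StrongDual ℝ (StrongDual ℝ C(K, ℝ)), Continuous[(weakTopology (StrongDual ℝ C(K, ℝ))), _] Λ := fun Λ => by
    have h1 : Continuous[(weakTopology (StrongDual ℝ C(K, ℝ))), Pi.topologicalSpace] (fun x : (StrongDual ℝ C(K, ℝ)) => fun Λ : StrongDual ℝ (StrongDual ℝ C(K, ℝ)) => Λ x) :=
      continuous_induced_dom
    exact @Continuous.comp _ _ _ (weakTopology (StrongDual ℝ C(K, ℝ))) _ _ _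
      (fun p : StrongDual ℝ (StrongDual ℝ C(K, ℝ)) → ℝ => p Λ) (continuous_apply Λ) h1
  have hopen : ∀ s, IsOpen[(weakTopology (StrongDual ℝ C(K, ℝ)))] s → IsOpen s := by
    intro s hs
    obtain ⟨t, ht, rfl⟩ := hs
    exact ht.preimage (continuous_pi fun Λ => Λ.continuous)
  apply le_antisymm
  · refine MeasurableSpace.generateFrom_le fun s hs => ?_
    exact MeasurableSpace.measurableSet_generateFrom (hopen s hs)
  · refine MeasurableSpace.generateFrom_le fun U hU => ?_
    have hU : IsOpen U := hU
    -- closed balls are weakly closed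
    have hball : ∀ r : ℝ, IsClosed[(weakTopology (StrongDual ℝ C(K, ℝ)))] {φ : (StrongDual ℝ C(K, ℝ)) | ‖φ‖ ≤ r} := by
      intro r
      by_cases hr : 0 ≤ r
      swap
      · have : {φ : (StrongDual ℝ C(K, ℝ)) | ‖φ‖ ≤ r} = ∅ := by
          ext φ; simp only [Set.mem_ofPred_eq, Set.mem_empty_iff_false, iff_false]
          exact fun h => hr ((norm_nonneg φ).trans h)
        rw [this]; exact @isClosed_empty _ (weakTopology (StrongDual ℝ C(K, ℝ)))
      have : {φ : (StrongDual ℝ C(K, ℝ)) | ‖φ‖ ≤ r} = ⋂ f : C(K, ℝ), {φ : (StrongDual ℝ C(K, ℝ)) | |φ f| ≤ r * ‖f‖} := by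
        ext φ
        simp only [Set.mem_ofPred_eq, Set.mem_iInter]
        exact ⟨fun h f => (φ.le_opNorm f).trans (mul_le_mul_of_nonneg_right h (norm_nonneg _)),
          fun h => φ.opNorm_le_bound hr h⟩
      rw [this]
      refine @isClosed_iInter _ _ (weakTopology (StrongDual ℝ C(K, ℝ))) _ fun f => ?_
      have h1 : Continuous[(weakTopology (StrongDual ℝ C(K, ℝ))), _] fun φ : (StrongDual ℝ C(K, ℝ)) => φ f := hcont (inclusionInDoubleDual ℝ C(K, ℝ) f)
      let t := (weakTopology (StrongDual ℝ C(K, ℝ)))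
      exact isClosed_le (continuous_abs.comp h1) continuous_const
    let W : ℚ → Set (StrongDual ℝ C(K, ℝ)) := fun s => ⋃₀ {V | IsOpen[(weakTopology (StrongDual ℝ C(K, ℝ)))] V ∧ V ∩ {φ | ‖φ‖ ≤ s} ⊆ U}
    have hW : ∀ s, IsOpen[(weakTopology (StrongDual ℝ C(K, ℝ)))] (W s) := fun s => @isOpen_sUnion _ (weakTopology (StrongDual ℝ C(K, ℝ))) _ fun V hV => hV.1
    have hUeq : U = ⋃ s : ℚ, W s ∩ {φ | ‖φ‖ ≤ s} := by
      apply Set.Subset.antisymm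
      · intro φ hφ
        obtain ⟨ε, hε, hball⟩ := Metric.isOpen_iff.1 hU φ hφ
        obtain ⟨F, δ, hδ, hF⟩ := aux_kadec (e.symm φ) ε hε
        obtain ⟨s, hs1, hs2⟩ := exists_rat_btwn (show ‖φ‖ < ‖φ‖ + δ by linarith)
        let c : K → StrongDual ℝ (StrongDual ℝ C(K, ℝ)) := fun x =>
          (lp.evalCLM ℝ (fun _ : K => ℝ) 1 x).comp (e.symm.toContinuousLinearEquiv : (StrongDual ℝ C(K, ℝ)) →L[ℝ] _)
        have hc : ∀ x ψ, c x ψ = e.symm ψ x := fun x ψ => rfl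
        refine Set.mem_iUnion.2 ⟨s, ⟨⋂ x ∈ F, {ψ | |c x ψ - c x φ| < δ}, ⟨?_, ?_⟩, ?_⟩, hs1.le⟩
        · let t := (weakTopology (StrongDual ℝ C(K, ℝ)))
          refine isOpen_biInter_finset fun x _ => ?_
          exact isOpen_lt (continuous_abs.comp ((hcont (c x)).sub continuous_const)) continuous_const
        · rintro ψ ⟨hψ1, hψ2⟩
          apply hball
          have hψ2 : ‖ψ‖ ≤ s := hψ2
          have := hF (e.symm ψ) (by
            rw [LinearIsometryEquiv.norm_map, LinearIsometryEquiv.norm_map]; linarith) (fun x hx => by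
              have := Set.mem_iInter₂.1 hψ1 x hx
              exact this)
          rw [← LinearIsometryEquiv.map_sub e.symm ψ φ, LinearIsometryEquiv.norm_map] at this
          exact (dist_eq_norm ψ φ).trans_lt this
        · refine Set.mem_iInter₂.2 fun x _ => ?_
          simpa using hδ
      · intro φ hφ
        obtain ⟨s, ⟨V, hV, hφV⟩, hs⟩ := Set.mem_iUnion.1 hφ
        exact hV.2 ⟨hφV, hs⟩
    rw [hUeq]
    let : MeasurableSpace (StrongDual ℝ C(K, ℝ)) := @borel (StrongDual ℝ C(K, ℝ)) (weakTopology (StrongDual ℝ C(K, ℝ)))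
    have hb : @BorelSpace (StrongDual ℝ C(K, ℝ)) (weakTopology (StrongDual ℝ C(K, ℝ))) _ := @BorelSpace.mk (StrongDual ℝ C(K, ℝ)) (weakTopology (StrongDual ℝ C(K, ℝ))) _ rfl
    refine MeasurableSet.iUnion fun s => MeasurableSet.inter ?_ ?_
    · exact MeasurableSpace.measurableSet_generateFrom (hW s)
    · rw [← MeasurableSet.compl_iff]
      exact MeasurableSpace.measurableSet_generateFrom (hball s).isOpen_compl
end

section
/- Let K be a compact Hausdorff space such that every subset of K is a Borel set. If the Borel σ-algebra generated by the weak-star topology on C*(K) coincides with the Borel σ-algebra generated by the weak topology on C*(K), then the Borel σ-algebra generated by the weak-star topology coincides with the Borel σ-algebra generated by the dual norm topology, i.e. Bo(C*(K), w*) = Bo(C*(K), w) implies Bo(C*(K), w*) = Bo(C*(K), ‖·‖). -/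
open NormedSpace MeasureTheory

open Set Topology Filter
open scoped ENNReal NNReal

lemma nullMeas_map {X Y : Type*} [TopologicalSpace X] [MeasurableSpace X] [BorelSpace X]
    [TopologicalSpace Y] [T2Space Y] [MeasurableSpace Y] [BorelSpace Y]
    (μ : Measure X) [IsFiniteMeasure μ] [μ.InnerRegular]
    (hN : ∀ s : Set X, NullMeasurableSet s μ) {f : X → Y} (hf : Continuous f) (A : Set Y) :
    NullMeasurableSet A (μ.map f) := by
  have key : ∀ A : Set Y, ∃ S, S ⊆ A ∧ MeasurableSet S ∧ μ (f ⁻¹' A) ≤ μ (f ⁻¹' S) := by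
    intro A
    obtain ⟨E, hEA, hE, hEe⟩ := (hN (f ⁻¹' A)).exists_measurable_subset_ae_eq
    have h1 : ∀ n : ℕ, ∃ C, C ⊆ E ∧ IsCompact C ∧ μ E ≤ μ C + ((n : ℝ≥0∞) + 1)⁻¹ := by
      intro n
      obtain ⟨C, h1, h2, h3⟩ := hE.exists_isCompact_lt_add (measure_ne_top μ E)
        (ε := ((n : ℝ≥0∞) + 1)⁻¹) (by simp)
      exact ⟨C, h1, h2, h3.le⟩
    choose C hC1 hC2 hC3 using h1
    refine ⟨⋃ n, f '' C n, ?_, ?_, ?_⟩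
    · refine iUnion_subset fun n => ?_
      rw [image_subset_iff]
      exact (hC1 n).trans hEA
    · exact MeasurableSet.iUnion fun n => ((hC2 n).image hf).measurableSet
    · rw [← measure_congr hEe]
      have h4 : ∀ n : ℕ, μ E ≤ μ (f ⁻¹' ⋃ n, f '' C n) + ((n : ℝ≥0∞) + 1)⁻¹ := by
        intro n
        refine (hC3 n).trans ?_
        gcongr
        rw [← image_subset_iff]
        exact subset_iUnion (fun n => f '' C n) n
      have h5 : Tendsto (fun n : ℕ => μ (f ⁻¹' ⋃ n, f '' C n) + ((n : ℝ≥0∞) + 1)⁻¹) atTop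
          (𝓝 (μ (f ⁻¹' ⋃ n, f '' C n) + 0)) := by
        refine Tendsto.add tendsto_const_nhds ?_
        have := (tendsto_add_atTop_iff_nat 1).2 ENNReal.tendsto_inv_nat_nhds_zero
        simpa using this
      rw [add_zero] at h5
      exact ge_of_tendsto' h5 h4
  obtain ⟨S, hSA, hS, hS'⟩ := key A
  obtain ⟨T, hTA, hT, hT'⟩ := key Aᶜ
  have hd : Disjoint S T := Set.disjoint_left.2 fun x hx hx2 => hTA hx2 (hSA hx)
  have hz : μ.map f (S ∪ T)ᶜ = 0 := by
    rw [Measure.map_apply hf.measurable (hS.union hT).compl, preimage_compl,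
      measure_compl (hf.measurable (hS.union hT)) (measure_ne_top _ _), tsub_eq_zero_iff_le,
      preimage_union, measure_union (hd.preimage f) (hf.measurable hT)]
    calc μ univ ≤ μ (f ⁻¹' A) + μ (f ⁻¹' A)ᶜ := by
          rw [← union_compl_self (f ⁻¹' A)]; exact measure_union_le _ _
      _ ≤ _ := add_le_add hS' hT'
  refine NullMeasurableSet.congr hS.nullMeasurableSet ?_
  rw [ae_eq_set]
  refine ⟨by simp [sdiff_eq_empty.2 hSA], measure_mono_null ?_ hz⟩
  rintro x ⟨hx, hxS⟩ (h | h)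
  · exact hxS h
  · exact hTA h hx

lemma vitali (hN : ∀ s : Set ℝ, NullMeasurableSet s (volume.restrict (Icc (0:ℝ) 1))) : False := by
  let r : Setoid ℝ := ⟨fun x y => ∃ q : ℚ, x - y = q, fun x => ⟨0, by simp⟩,
    fun {x y} ⟨q, hq⟩ => ⟨-q, by push_cast; linarith⟩,
    fun {x y z} ⟨q, hq⟩ ⟨p, hp⟩ => ⟨q + p, by push_cast; linarith⟩⟩
  let g : ℝ → ℝ := fun x => Int.fract (Quotient.out (Quotient.mk r x))
  have hg1 : ∀ x, ∃ q : ℚ, x = g x + q := by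
    intro x
    obtain ⟨q, hq⟩ : r (Quotient.out (Quotient.mk r x)) x := Quotient.mk_out x
    refine ⟨⌊Quotient.out (Quotient.mk r x)⌋ - q, ?_⟩
    have := Int.floor_add_fract (Quotient.out (Quotient.mk r x))
    simp only [g]; push_cast; linarith
  have hg2 : ∀ x y : ℝ, (∃ q : ℚ, x - y = q) → g x = g y := by
    intro x y hxy
    simp only [g]
    rw [Quotient.sound (s := r) hxy]
  set V := range g with hV
  have hV1 : V ⊆ Icc 0 1 := by
    rintro _ ⟨x, rfl⟩
    exact ⟨Int.fract_nonneg _, (Int.fract_lt_one _).le⟩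
  have hVn : NullMeasurableSet V volume := by
    have := (nullMeasurableSet_restrict (μ := volume) measurableSet_Icc.nullMeasurableSet).1 (hN V)
    rwa [inter_eq_left.2 hV1] at this
  have hdiff : ∀ x ∈ V, ∀ y ∈ V, (∃ q : ℚ, x - y = q) → x = y := by
    rintro _ ⟨x, rfl⟩ _ ⟨y, rfl⟩ ⟨q, hq⟩
    apply hg2
    obtain ⟨a, ha⟩ := hg1 x
    obtain ⟨b, hb⟩ := hg1 y
    exact ⟨q + a - b, by push_cast; linarith⟩
  obtain ⟨E, hEV, hE, hEe⟩ := hVn.exists_measurable_subset_ae_eq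
  have hE0 : volume E = 0 := by
    by_contra h0
    have hnh := Measure.sub_mem_nhds_zero_of_addHaar_pos volume E hE (pos_iff_ne_zero.2 h0)
    have h2 : Tendsto (fun n : ℕ => (1 / ((n:ℝ) + 1))) atTop (𝓝 0) :=
      tendsto_one_div_add_atTop_nhds_zero_nat
    obtain ⟨n, hn⟩ := (h2.eventually hnh).exists
    obtain ⟨x, hx, y, hy, hxy⟩ := hn
    have h3 := hdiff x (hEV hx) y (hEV hy) ⟨1 / (n + 1), by simpa using hxy⟩
    have h4 : (0:ℝ) < 1 / ((n:ℝ) + 1) := by positivity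
    simp only [h3, sub_self] at hxy
    linarith
  have hV0 : volume V = 0 := by rw [← measure_congr hEe, hE0]
  have hu : (univ : Set ℝ) ⊆ ⋃ q : ℚ, (fun x => x + (-q : ℝ)) ⁻¹' V := by
    intro x _
    obtain ⟨q, hq⟩ := hg1 x
    rw [mem_iUnion]
    exact ⟨q, x, by linarith⟩
  have : volume (univ : Set ℝ) = 0 := by
    refine measure_mono_null hu (measure_iUnion_null fun q => ?_)
    rw [measure_preimage_add_right, hV0]
  simp at this

lemma map_cdf (m : Measure ℝ) [IsProbabilityMeasure m] [NullSingletonClass m] :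
    Continuous (ProbabilityTheory.cdf m) ∧
    m.map (ProbabilityTheory.cdf m) = volume.restrict (Icc (0:ℝ) 1) := by
  set F := ProbabilityTheory.cdf m with hF
  have hm : F.measure = m := ProbabilityTheory.measure_cdf m
  have hc : Continuous F := by
    rw [continuous_iff_continuousAt]
    intro x
    rw [F.mono.continuousAt_iff_leftLim_eq_rightLim, F.rightLim_eq]
    have h1 : F.measure {x} = 0 := by rw [hm]; simp
    rw [F.measure_singleton, ENNReal.ofReal_eq_zero] at h1
    have h2 := F.mono.leftLim_le (le_refl x)
    linarith
  refine ⟨hc, ?_⟩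
  have : IsProbabilityMeasure (m.map F) := Measure.isProbabilityMeasure_map hc.measurable.aemeasurable
  have h0 := ProbabilityTheory.tendsto_cdf_atBot m
  have h1 := ProbabilityTheory.tendsto_cdf_atTop m
  apply Measure.ext_of_Iic
  intro t
  rw [Measure.map_apply hc.measurable measurableSet_Iic, Measure.restrict_apply measurableSet_Iic]
  rcases lt_or_ge t 0 with ht | ht
  · have e1 : F ⁻¹' Iic t = ∅ := by
      ext x; have := ProbabilityTheory.cdf_nonneg m x
      simp only [mem_preimage, mem_Iic, mem_empty_iff_false, iff_false, not_le]; linarith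
    have e2 : Iic t ∩ Icc (0:ℝ) 1 = ∅ := by
      ext x; simp only [mem_inter_iff, mem_Iic, mem_Icc, mem_empty_iff_false, iff_false]
      rintro ⟨a, b, c⟩; linarith
    rw [e1, e2]; simp
  rcases le_or_gt 1 t with ht1 | ht1
  · have e1 : F ⁻¹' Iic t = univ := by
      ext x; have := ProbabilityTheory.cdf_le_one m x
      simp only [mem_preimage, mem_Iic, mem_univ, iff_true]; linarith
    have e2 : Iic t ∩ Icc (0:ℝ) 1 = Icc 0 1 := by
      ext x; simp only [mem_inter_iff, mem_Iic, mem_Icc, and_iff_right_iff_imp]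
      rintro ⟨a, b⟩; linarith
    rw [e1, e2]; simp
  have e2 : Iic t ∩ Icc (0:ℝ) 1 = Icc 0 t := by
    ext x; simp only [mem_inter_iff, mem_Iic, mem_Icc]
    constructor
    · rintro ⟨a, b, c⟩; exact ⟨b, a⟩
    · rintro ⟨a, b⟩; exact ⟨b, a, by linarith⟩
  rw [e2, Real.volume_Icc, sub_zero]
  -- closed set bounded above
  have hbd : BddAbove (F ⁻¹' Iic t) := by
    obtain ⟨b, hb⟩ := (h1.eventually (lt_mem_nhds ht1)).exists
    exact ⟨b, fun x hx => le_of_lt (F.mono.reflect_lt (lt_of_le_of_lt hx hb))⟩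
  by_cases hne : (F ⁻¹' Iic t).Nonempty
  · set s := sSup (F ⁻¹' Iic t)
    have hs : F s ≤ t := (isClosed_Iic.preimage hc).csSup_mem hne hbd
    have e1 : F ⁻¹' Iic t = Iic s := by
      ext x
      exact ⟨fun hx => le_csSup hbd hx, fun hx => (F.mono hx).trans hs⟩
    have hst : F s = t := by
      refine le_antisymm hs ?_
      refine ge_of_tendsto (x := 𝓝[>] s) (hc.continuousAt.tendsto.mono_left nhdsWithin_le_nhds) ?_
      filter_upwards [self_mem_nhdsWithin] with x hx
      by_contra hlt
      have : x ∈ F ⁻¹' Iic t := (not_le.1 hlt).le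
      rw [e1] at this
      exact (not_le.2 (mem_Ioi.1 hx)) (mem_Iic.1 this)
    rw [e1, ← ProbabilityTheory.ofReal_cdf m s, ← hF, hst]
  · rw [not_nonempty_iff_eq_empty] at hne
    rw [hne, measure_empty]
    have : t ≤ 0 := ge_of_tendsto h0 (Eventually.of_forall fun x => by
      by_contra hlt
      have : x ∈ F ⁻¹' Iic t := (not_le.1 hlt).le
      rw [hne] at this
      exact this)
    rw [ENNReal.ofReal_of_nonpos this]


lemma atomless_zero {K : Type*} [TopologicalSpace K] [CompactSpace K] [T2Space K]
    [MeasurableSpace K] [BorelSpace K] (hB : ∀ s : Set K, MeasurableSet s)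
    (ν : Measure K) [IsFiniteMeasure ν] [ν.Regular] (hν : ∀ x, ν {x} = 0) : ν = 0 := by
  by_contra hne
  have h1 : ∀ (n : ℕ) (x : K), ∃ f : C(K, ℝ), f x = 1 ∧ ν {y | 0 < f y} < ((n : ℝ≥0∞) + 1)⁻¹ := by
    intro n x
    obtain ⟨U, hU, hUo, hUν⟩ := Set.exists_isOpen_lt_of_lt {x} (μ := ν) (((n : ℝ≥0∞) + 1)⁻¹)
      (by rw [hν]; simp)
    obtain ⟨f, hf0, hf1, -⟩ := exists_continuous_zero_one_of_isClosed hUo.isClosed_compl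
      (isClosed_singleton (x := x)) (by
        rw [Set.disjoint_singleton_right]; simpa using hU)
    refine ⟨f, hf1 rfl, lt_of_le_of_lt (measure_mono ?_) hUν⟩
    intro y hy
    by_contra hyU
    have : f y = 0 := hf0 hyU
    simp [this] at hy
  choose f hf1 hfν using h1
  have h2 : ∀ n : ℕ, ∃ t : Finset K, (univ : Set K) ⊆ ⋃ x ∈ t, {y | 0 < f n x y} := by
    intro n
    obtain ⟨t, ht⟩ := isCompact_univ.elim_finite_subcover (fun x => {y | 0 < f n x y})
      (fun x => isOpen_lt continuous_const (f n x).continuous)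
      (fun x _ => mem_iUnion.2 ⟨x, by simp [hf1]⟩)
    exact ⟨t, ht⟩
  choose t ht using h2
  let ι := Σ n, t n
  let G : K → (ι → ℝ) := fun y i => f i.1 i.2.1 y
  have hG : Continuous G := by
    refine continuous_pi fun i => (f i.1 i.2.1).continuous
  have : IsFiniteMeasure (ν.map G) := inferInstance
  have hP : ∀ A, NullMeasurableSet A (ν.map G) :=
    nullMeas_map ν (fun s => (hB s).nullMeasurableSet) hG
  have hat : ∀ z, ν.map G {z} = 0 := by
    intro z
    rw [Measure.map_apply hG.measurable (measurableSet_singleton z)]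
    by_contra h0
    have hne : (G ⁻¹' {z}).Nonempty := by
      by_contra he
      rw [not_nonempty_iff_eq_empty] at he
      simp [he] at h0
    obtain ⟨y, hy⟩ := hne
    obtain ⟨n, hn⟩ := ENNReal.exists_inv_nat_lt h0
    obtain ⟨x, hx, hxy⟩ := mem_iUnion₂.1 (ht n (mem_univ y))
    have h3 : G ⁻¹' {z} ⊆ {y | 0 < f n x y} := by
      intro w hw
      have h4 : G w = G y := by rw [hw, hy]
      have h5 : f n x w = f n x y := congrFun h4 ⟨n, ⟨x, hx⟩⟩
      simp only [mem_ofPred_eq] at hxy ⊢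
      rwa [h5]
    have h6 := (measure_mono (μ := ν) h3).trans_lt (hfν n x)
    have h7 : ((n : ℝ≥0∞) + 1)⁻¹ ≤ (n : ℝ≥0∞)⁻¹ := ENNReal.inv_le_inv.2 le_self_add
    exact lt_irrefl _ ((hn.trans h6).trans_le h7)
  obtain ⟨e, he⟩ := exists_measurableEmbedding_real (ι → ℝ)
  set ρ := (ν.map G).map e with hρ
  have hR : ∀ A, NullMeasurableSet A ρ := by
    intro A
    obtain ⟨T, hTA, hT, hTe⟩ := (hP (e ⁻¹' A)).exists_measurable_subset_ae_eq
    refine NullMeasurableSet.congr (he.measurableSet_image.2 hT).nullMeasurableSet ?_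
    refine he.ae_map_iff.2 ?_
    filter_upwards [hTe] with x hx
    have hx' : (x ∈ T) = (x ∈ e ⁻¹' A) := hx
    change (e x ∈ e '' T) = (e x ∈ A)
    rw [he.injective.mem_set_image, hx']
    rfl
  have hρ0 : ρ univ ≠ 0 := by
    rw [hρ, Measure.map_apply he.measurable MeasurableSet.univ, preimage_univ,
      Measure.map_apply hG.measurable MeasurableSet.univ, preimage_univ]
    simpa using hne
  have hρ1 : ∀ x, ρ {x} = 0 := by
    intro x
    rw [hρ, Measure.map_apply he.measurable (measurableSet_singleton x)]
    by_cases hx : ∃ z, e z = x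
    · obtain ⟨z, rfl⟩ := hx
      have : e ⁻¹' {e z} = {z} := by ext w; simp [he.injective.eq_iff]
      rw [this, hat]
    · have : e ⁻¹' {x} = ∅ := by
        ext w; simp only [mem_preimage, mem_singleton_iff, mem_empty_iff_false, iff_false]
        exact fun hw => hx ⟨w, hw⟩
      rw [this, measure_empty]
  let m := (ρ univ)⁻¹ • ρ
  have : NeZero ρ := ⟨fun h => hρ0 (by simp [h])⟩
  have : IsProbabilityMeasure m := inferInstance
  have : NullSingletonClass m := ⟨fun x => by simp [m, hρ1]⟩
  have hm : ∀ A, NullMeasurableSet A m := fun A => (hR A).mono_ac Measure.smul_absolutelyContinuous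
  obtain ⟨hc, hmap⟩ := map_cdf m
  refine vitali fun s => ?_
  rw [← hmap]
  exact nullMeas_map m hm hc s

lemma rep_measure {K : Type*} [TopologicalSpace K] [CompactSpace K] [T2Space K]
    [MeasurableSpace K] [BorelSpace K] (hB : ∀ s : Set K, MeasurableSet s)
    (μ : Measure K) [IsFiniteMeasure μ] [μ.Regular] (f : C(K, ℝ)) :
    HasSum (fun x => μ.real {x} * f x) (∫ x, f x ∂μ) := by
  set A : Set K := {x | 0 < μ {x}} with hA
  have hAc : A.Countable := by
    refine Measure.countable_meas_pos_of_disjoint_iUnion (μ := μ) (As := fun x : K => {x})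
      (fun x => hB _) ?_
    intro x y hxy
    simpa [Function.onFun] using hxy
  have : Countable A := hAc
  have : (μ.restrict Aᶜ).Regular := Measure.Regular.restrict_of_measure_ne_top (measure_ne_top _ _)
  have hz : μ.restrict Aᶜ = 0 := by
    refine atomless_zero hB _ fun x => ?_
    rw [Measure.restrict_apply (hB _)]
    by_cases hx : x ∈ A
    · have : ({x} : Set K) ∩ Aᶜ = ∅ := by ext y; simp; rintro rfl; exact hx
      rw [this, measure_empty]
    · refine measure_mono_null inter_subset_left ?_
      simpa [hA] using hx
  have hμ : μ.restrict A = μ := by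
    have := Measure.restrict_add_restrict_compl (μ := μ) (hB A)
    rwa [hz, add_zero] at this
  have hint : Integrable f μ := by
    refine Integrable.of_bound f.continuous.measurable.aestronglyMeasurable ‖f‖ ?_
    exact Eventually.of_forall fun x => f.norm_coe_le_norm x
  have h1 := hasSum_integral_iUnion (μ := μ) (f := f) (s := fun x : A => ({x.1} : Set K))
    (fun x => hB _) (by intro x y hxy; simpa [Function.onFun, Subtype.ext_iff] using hxy) hint.integrableOn
  have h2 : (⋃ x : A, ({x.1} : Set K)) = A := by ext; simp
  rw [h2, hμ] at h1
  simp only [integral_singleton, smul_eq_mul] at h1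
  refine (hasSum_subtype_iff_of_support_subset (s := A) ?_).1 h1
  intro x hx
  simp only [Function.mem_support, ne_eq, mul_eq_zero, not_or] at hx
  by_contra hxA
  apply hx.1
  have : μ {x} = 0 := by simpa [hA] using hxA
  simp [Measure.real, this]

lemma exists_measure {K : Type*} [TopologicalSpace K] [CompactSpace K] [T2Space K]
    [MeasurableSpace K] [BorelSpace K] (q : C(K, ℝ) → ℝ)
    (hadd : ∀ f g, 0 ≤ f → 0 ≤ g → q (f + g) = q f + q g)
    (hsmul : ∀ (c : ℝ) f, 0 ≤ c → 0 ≤ f → q (c • f) = c * q f)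
    (hpos : ∀ f, 0 ≤ f → 0 ≤ q f) :
    ∃ μ : Measure K, IsFiniteMeasure μ ∧ μ.Regular ∧ ∀ f : C(K, ℝ), 0 ≤ f → q f = ∫ x, f x ∂μ := by
  let toC : CompactlySupportedContinuousMap K ℝ≥0 → C(K, ℝ) := fun f => ⟨fun x => (f x : ℝ), by fun_prop⟩
  have h0 : ∀ f, 0 ≤ toC f := fun f x => (f x).2
  let Λ : CompactlySupportedContinuousMap K ℝ≥0 →ₗ[ℝ≥0] ℝ≥0 :=
    { toFun := fun f => ⟨q (toC f), hpos _ (h0 f)⟩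
      map_add' := fun f g => by
        apply NNReal.eq
        change q (toC (f + g)) = q (toC f) + q (toC g)
        rw [← hadd _ _ (h0 f) (h0 g)]; congr 1
      map_smul' := fun c f => by
        apply NNReal.eq
        change q (toC (c • f)) = c * q (toC f)
        exact (congrArg q (by ext x; rfl)).trans (hsmul (c : ℝ) (toC f) c.2 (h0 f)) }
  refine ⟨NNRealRMK.rieszMeasure Λ, inferInstance, inferInstance, fun f hf => ?_⟩
  let F : CompactlySupportedContinuousMap K ℝ≥0 :=
    ⟨⟨fun x => (f x).toNNReal, by fun_prop⟩, HasCompactSupport.of_compactSpace _⟩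
  have hF : ∀ x, ((F x : ℝ≥0) : ℝ) = f x := fun x => Real.coe_toNNReal _ (hf x)
  have h1 := NNRealRMK.integral_rieszMeasure Λ F
  simp only [hF] at h1
  rw [h1]
  change q f = q (toC F)
  congr 1
  ext x
  exact (hF x).symm

lemma jordan {K : Type*} [TopologicalSpace K] [CompactSpace K]
    (φ : StrongDual ℝ C(K, ℝ)) : ∃ p : C(K, ℝ) → ℝ,
    (∀ f g, 0 ≤ f → 0 ≤ g → p (f + g) = p f + p g) ∧
    (∀ (c : ℝ) f, 0 ≤ c → 0 ≤ f → p (c • f) = c * p f) ∧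
    (∀ f, 0 ≤ f → 0 ≤ p f) ∧ (∀ f, 0 ≤ f → φ f ≤ p f) := by
  let S : C(K, ℝ) → Set ℝ := fun f => {r | ∃ g : C(K, ℝ), 0 ≤ g ∧ g ≤ f ∧ φ g = r}
  have hbd : ∀ f, BddAbove (S f) := by
    intro f
    refine ⟨‖φ‖ * ‖f‖, ?_⟩
    rintro _ ⟨g, hg0, hgf, rfl⟩
    refine (le_abs_self _).trans ((φ.le_opNorm g).trans ?_)
    gcongr
    rw [ContinuousMap.norm_le _ (norm_nonneg _)]
    intro x
    refine le_trans ?_ (f.norm_coe_le_norm x)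
    have h1 : 0 ≤ g x := hg0 x
    have h2 : g x ≤ f x := hgf x
    rw [Real.norm_of_nonneg h1, Real.norm_of_nonneg (h1.trans h2)]
    exact h2
  have hne : ∀ f, 0 ≤ f → (S f).Nonempty := fun f hf => ⟨0, 0, le_rfl, hf, by simp⟩
  have hle : ∀ f g, 0 ≤ g → g ≤ f → φ g ≤ sSup (S f) := fun f g h1 h2 =>
    le_csSup (hbd f) ⟨g, h1, h2, rfl⟩
  have hscale : ∀ (c : ℝ) f, 0 < c → 0 ≤ f → c * sSup (S f) ≤ sSup (S (c • f)) := by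
    intro c f hc hf
    rw [← le_div_iff₀' hc]
    refine csSup_le (hne f hf) ?_
    rintro _ ⟨g, hg0, hgf, rfl⟩
    rw [le_div_iff₀' hc]
    have := hle (c • f) (c • g) (fun x => mul_nonneg hc.le (hg0 x))
      (fun x => mul_le_mul_of_nonneg_left (hgf x) hc.le)
    simpa using this
  refine ⟨fun f => sSup (S f), ?_, ?_, ?_, ?_⟩
  · intro f g hf hg
    apply le_antisymm
    · refine csSup_le (hne _ (add_nonneg hf hg)) ?_
      rintro _ ⟨h, h0, hfg, rfl⟩
      have e : h = (h ⊓ f) + (h - h ⊓ f) := by abel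
      rw [e, map_add]
      refine add_le_add (hle f _ (le_inf h0 hf) inf_le_right) (hle g _ ?_ ?_)
      · exact sub_nonneg.2 inf_le_left
      · intro x
        have h1 : h x ≤ f x + g x := hfg x
        have h2 : 0 ≤ g x := hg x
        change h x - min (h x) (f x) ≤ g x
        rcases min_cases (h x) (f x) with h3 | h3 <;> linarith
    · rw [← le_sub_iff_add_le]
      refine csSup_le (hne f hf) ?_
      rintro _ ⟨a, ha0, haf, rfl⟩
      rw [le_sub_comm]
      refine csSup_le (hne g hg) ?_
      rintro _ ⟨b, hb0, hbg, rfl⟩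
      rw [le_sub_iff_add_le, add_comm, ← map_add]
      exact hle _ _ (add_nonneg ha0 hb0) (add_le_add haf hbg)
  · intro c f hc hf
    rcases hc.eq_or_lt with rfl | hc
    · simp only [zero_smul, zero_mul]
      apply le_antisymm
      · refine csSup_le (hne 0 le_rfl) ?_
        rintro _ ⟨g, h0, h1, rfl⟩
        rw [le_antisymm h1 h0]; simp
      · simpa using hle 0 0 le_rfl le_rfl
    · apply le_antisymm _ (hscale c f hc hf)
      have := hscale c⁻¹ (c • f) (inv_pos.2 hc) (fun x => mul_nonneg hc.le (hf x))
      rw [inv_smul_smul₀ hc.ne', inv_mul_le_iff₀ hc] at this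
      exact this
  · intro f hf
    simpa using hle f 0 le_rfl hf
  · intro f hf
    exact hle f f hf le_rfl

lemma rep_dual {K : Type*} [TopologicalSpace K] [CompactSpace K] [T2Space K]
    (hB : ∀ s : Set K, MeasurableSet[borel K] s) (φ : StrongDual ℝ C(K, ℝ)) :
    ∃ a : K → ℝ, Summable a ∧ ∀ f : C(K, ℝ), HasSum (fun x => a x * f x) (φ f) := by
  letI : MeasurableSpace K := borel K
  have : BorelSpace K := ⟨rfl⟩
  obtain ⟨p, hadd, hsmul, hpos, hle⟩ := jordan φ
  obtain ⟨μ, hμ1, hμ2, hμ⟩ := exists_measure p hadd hsmul hpos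
  obtain ⟨ν, hν1, hν2, hν⟩ := exists_measure (fun f => p f - φ f)
    (fun f g hf hg => by rw [hadd f g hf hg, map_add]; ring)
    (fun c f hc hf => by rw [hsmul c f hc hf, map_smul, smul_eq_mul]; ring)
    (fun f hf => sub_nonneg.2 (hle f hf))
  have h1 : ∀ f : C(K, ℝ), 0 ≤ f →
      HasSum (fun x => (μ.real {x} - ν.real {x}) * f x) (φ f) := by
    intro f hf
    have := (rep_measure hB μ f).sub (rep_measure hB ν f)
    rw [← hμ f hf, ← hν f hf, sub_sub_cancel] at this
    simpa only [sub_mul] using this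
  have h2 : ∀ f : C(K, ℝ), HasSum (fun x => (μ.real {x} - ν.real {x}) * f x) (φ f) := by
    intro f
    have := (h1 (f ⊔ 0) le_sup_right).sub (h1 ((f ⊔ 0) - f) (sub_nonneg.2 le_sup_left))
    rw [map_sub, sub_sub_cancel] at this
    refine this.congr_fun ?_
    intro x
    simp only [ContinuousMap.sub_apply]
    ring
  refine ⟨fun x => μ.real {x} - ν.real {x}, ?_, h2⟩
  have := (h2 1).summable
  simpa using this

abbrev L1 (K : Type*) := lp (fun _ : K => ℝ) 1

lemma l1_hasSum {K : Type*} (a : L1 K) : HasSum (fun x => |a x|) ‖a‖ := by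
  simpa using lp.hasSum_norm (p := 1) (by simp) a

lemma l1_summable_mul {K : Type*} [TopologicalSpace K] [CompactSpace K] (a : L1 K) (f : C(K, ℝ)) :
    Summable (fun x => |a x * f x|) := by
  refine Summable.of_nonneg_of_le (fun _ => abs_nonneg _) (fun x => ?_)
    ((l1_hasSum a).summable.mul_right ‖f‖)
  rw [abs_mul]
  gcongr
  exact f.norm_coe_le_norm x

lemma l1_bound {K : Type*} [TopologicalSpace K] [CompactSpace K] (a : L1 K) (f : C(K, ℝ)) :
    |∑' x, a x * f x| ≤ ‖a‖ * ‖f‖ := by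
  rw [← ((l1_hasSum a).mul_right ‖f‖).tsum_eq]
  have h1 : ∀ x, |a x * f x| ≤ |a x| * ‖f‖ := fun x => by
    rw [abs_mul]
    gcongr
    exact f.norm_coe_le_norm x
  have h2 := norm_tsum_le_tsum_norm (f := fun x => a x * f x) (l1_summable_mul a f)
  refine h2.trans ?_
  exact (l1_summable_mul a f).tsum_le_tsum h1 ((l1_hasSum a).summable.mul_right ‖f‖)

noncomputable def l1Fun {K : Type*} [TopologicalSpace K] [CompactSpace K] (a : L1 K) :
    StrongDual ℝ C(K, ℝ) :=
  LinearMap.mkContinuous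
    { toFun := fun f => ∑' x, a x * f x
      map_add' := fun f g => by
        rw [← (l1_summable_mul a f).of_abs.tsum_add (l1_summable_mul a g).of_abs]
        simp [mul_add]
      map_smul' := fun c f => by
        simp only [ContinuousMap.smul_apply, smul_eq_mul, RingHom.id_apply, ← tsum_mul_left]
        congr 1; ext x; ring } ‖a‖ (fun f => l1_bound a f)

lemma l1Fun_apply {K : Type*} [TopologicalSpace K] [CompactSpace K] (a : L1 K) (f : C(K, ℝ)) :
    l1Fun a f = ∑' x, a x * f x := rfl

lemma exists_sign {K : Type*} [TopologicalSpace K] [CompactSpace K] [T2Space K] (a : K → ℝ)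
    (F : Finset K) : ∃ f : C(K, ℝ), (∀ x, |f x| ≤ 1) ∧ ∀ x ∈ F, a x * f x = |a x| := by
  have hd : DiscreteTopology (F : Set K) := inferInstance
  let g : C((F : Set K), ℝ) := ⟨fun x => SignType.sign (a x), continuous_of_discreteTopology⟩
  obtain ⟨f, hf, hfg⟩ := ContinuousMap.exists_restrict_eq_forall_mem_of_closed g
    (t := Icc (-1 : ℝ) 1) (fun x => by
      change ((SignType.sign (a x) : SignType) : ℝ) ∈ Icc (-1 : ℝ) 1
      rcases SignType.sign (a x) with _ | _ | _ <;> simp) ⟨0, by simp⟩ F.finite_toSet.isClosed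
  refine ⟨f, fun x => abs_le.2 (hf x), fun x hx => ?_⟩
  have : f x = SignType.sign (a x) := DFunLike.congr_fun hfg (⟨x, hx⟩ : (F : Set K))
  rw [this, self_mul_sign]

lemma l1Fun_norm {K : Type*} [TopologicalSpace K] [CompactSpace K] [T2Space K] (a : L1 K) :
    ‖l1Fun a‖ = ‖a‖ := by
  apply le_antisymm
  · exact LinearMap.mkContinuous_norm_le _ (norm_nonneg _) _
  have h1 : ∀ F : Finset K, 2 * ∑ x ∈ F, |a x| - ‖a‖ ≤ ‖l1Fun a‖ := by
    intro F
    obtain ⟨f, hf1, hf2⟩ := exists_sign a F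
    have hfn : ‖f‖ ≤ 1 := (ContinuousMap.norm_le _ zero_le_one).2 hf1
    have h2 : l1Fun a f ≤ ‖l1Fun a‖ := by
      refine (le_abs_self _).trans (((l1Fun a).le_opNorm f).trans ?_)
      exact mul_le_of_le_one_right (norm_nonneg _) hfn
    refine le_trans ?_ h2
    have h3 : HasSum (fun x => a x * f x + |a x|) (l1Fun a f + ‖a‖) :=
      ((l1_summable_mul a f).of_abs.hasSum).add (l1_hasSum a)
    have h4 := sum_le_hasSum F (fun x _ => by
      have h5 : |a x * f x| ≤ |a x| := by
        rw [abs_mul]; exact mul_le_of_le_one_right (abs_nonneg _) (hf1 x)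
      linarith [neg_abs_le (a x * f x)]) h3
    have h6 : ∑ x ∈ F, (a x * f x + |a x|) = 2 * ∑ x ∈ F, |a x| := by
      rw [Finset.mul_sum]
      refine Finset.sum_congr rfl fun x hx => ?_
      rw [hf2 x hx]; ring
    rw [h6] at h4
    linarith
  have h2 : Tendsto (fun F : Finset K => 2 * ∑ x ∈ F, |a x| - ‖a‖) atTop (𝓝 (2 * ‖a‖ - ‖a‖)) :=
    ((l1_hasSum a).const_mul 2).sub_const _
  have := le_of_tendsto' h2 h1
  linarith

noncomputable def l1Iso (K : Type*) [TopologicalSpace K] [CompactSpace K] [T2Space K] :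
    L1 K →ₗᵢ[ℝ] StrongDual ℝ C(K, ℝ) where
  toFun := l1Fun
  map_add' a b := by
    ext f
    change ∑' x, (a + b) x * f x = ∑' x, a x * f x + ∑' x, b x * f x
    rw [← (l1_summable_mul a f).of_abs.tsum_add (l1_summable_mul b f).of_abs]
    simp [add_mul]
  map_smul' c a := by
    ext f
    change ∑' x, (c • a) x * f x = c * ∑' x, a x * f x
    rw [← tsum_mul_left]
    simp [mul_assoc]
  norm_map' := l1Fun_norm

lemma l1Iso_surj {K : Type*} [TopologicalSpace K] [CompactSpace K] [T2Space K]
    (hB : ∀ s : Set K, MeasurableSet[borel K] s) : Function.Surjective (l1Iso K) := by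
  intro φ
  obtain ⟨a, ha, h⟩ := rep_dual hB φ
  refine ⟨⟨a, memℓp_gen (by simpa using ha.abs)⟩, ?_⟩
  ext f
  exact (h f).tsum_eq

lemma continuous_weak {E : Type*} [NormedAddCommGroup E] [NormedSpace ℝ E] (Λ : StrongDual ℝ E) :
    @Continuous E ℝ (weakTopology E) _ Λ := by
  have h : @Continuous E (StrongDual ℝ E → ℝ) (weakTopology E) _
      (fun x : E => fun Λ : StrongDual ℝ E => Λ x) := by
    unfold weakTopology
    exact continuous_induced_dom
  exact @Continuous.comp E (StrongDual ℝ E → ℝ) ℝ (weakTopology E) _ _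
    (fun x : E => fun Λ : StrongDual ℝ E => Λ x) (fun u => u Λ) (continuous_apply Λ) h

lemma norm_le_weak (E : Type*) [NormedAddCommGroup E] [NormedSpace ℝ E] :
    (inferInstance : TopologicalSpace E) ≤ weakTopology E := by
  refine continuous_iff_le_induced.1 ?_
  exact continuous_pi fun Λ => Λ.continuous

lemma closedBall_weak {E : Type*} [NormedAddCommGroup E] [NormedSpace ℝ E] (r : ℝ) :
    @IsClosed E (weakTopology E) {y : E | ‖y‖ ≤ r} := by
  rcases lt_or_ge r 0 with hr | hr
  · have : {y : E | ‖y‖ ≤ r} = ∅ := by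
      ext y; have := norm_nonneg y
      simp only [mem_ofPred_eq, mem_empty_iff_false, iff_false]; linarith
    rw [this]; exact @isClosed_empty E (weakTopology E)
  have : {y : E | ‖y‖ ≤ r} = ⋂ Λ : StrongDual ℝ E, {y | Λ y ≤ ‖Λ‖ * r} := by
    ext y
    simp only [mem_ofPred_eq, mem_iInter]
    constructor
    · intro hy Λ
      exact (le_abs_self _).trans ((Λ.le_opNorm y).trans (by gcongr))
    · intro h
      obtain ⟨g, hg1, hg2⟩ := exists_dual_vector'' ℝ y
      have := h g
      rw [hg2] at this
      exact this.trans (mul_le_of_le_one_left hr hg1)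
  rw [this]
  refine @isClosed_iInter E _ (weakTopology E) _ fun Λ => ?_
  exact @IsClosed.preimage E ℝ (weakTopology E) _ Λ (continuous_weak Λ) _ isClosed_Iic

lemma kadec {E K : Type*} [NormedAddCommGroup E] [NormedSpace ℝ E] (e : E ≃ₗᵢ[ℝ] L1 K)
    (x : E) {ε : ℝ} (hε : 0 < ε) : ∃ V : Set E, IsOpen[weakTopology E] V ∧ x ∈ V ∧
      ∀ y ∈ V, ‖y‖ < ‖x‖ + ε → ‖y - x‖ < 6 * ε := by
  obtain ⟨F, hF⟩ := ((l1_hasSum (e x)).eventually (lt_mem_nhds (sub_lt_self ‖e x‖ hε))).exists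
  rw [e.norm_map] at hF
  let c : K → StrongDual ℝ E := fun i => LinearMap.mkContinuous
    { toFun := fun y => e y i
      map_add' := fun y z => by simp
      map_smul' := fun r y => by simp } 1 (fun y => by
        have := lp.norm_apply_le_norm (p := 1) (by simp) (e y) i
        rw [e.norm_map] at this
        simpa using this)
  have hc : ∀ i y, c i y = e y i := fun i y => rfl
  refine ⟨{y | ∑ i ∈ F, |c i y - c i x| < ε}, ?_, ?_, ?_⟩
  · have hcont : @Continuous E ℝ (weakTopology E) _ (fun y => ∑ i ∈ F, |c i y - c i x|) := by
      letI := weakTopology E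
      refine continuous_finsetSum _ fun i _ => ?_
      exact ((continuous_weak (c i)).sub continuous_const).abs
    exact @IsOpen.preimage E ℝ (weakTopology E) _ _ hcont _ isOpen_Iio
  · simpa using hε
  · intro y hy hyn
    simp only [mem_ofPred_eq, hc] at hy
    have h1 : HasSum (fun i => |e y i| + |e x i| - |e (y - x) i|) (‖y‖ + ‖x‖ - ‖y - x‖) := by
      have := ((l1_hasSum (e y)).add (l1_hasSum (e x))).sub (l1_hasSum (e (y - x)))
      simpa only [e.norm_map] using this
    have h2 := sum_le_hasSum F (fun i _ => by
      have : |e (y - x) i| ≤ |e y i| + |e x i| := by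
        rw [map_sub]; exact abs_sub _ _
      linarith) h1
    have h3 : ∑ i ∈ F, (2 * |e x i| - 2 * |e y i - e x i|) ≤
        ∑ i ∈ F, (|e y i| + |e x i| - |e (y - x) i|) := by
      refine Finset.sum_le_sum fun i _ => ?_
      have h4 : e (y - x) i = e y i - e x i := by rw [map_sub]; rfl
      rw [h4]
      have h5 : |e x i| ≤ |e y i| + |e y i - e x i| := by
        have := abs_sub_abs_le_abs_sub (e x i) (e y i)
        rw [abs_sub_comm] at this
        linarith
      linarith
    rw [Finset.sum_sub_distrib, ← Finset.mul_sum, ← Finset.mul_sum] at h3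
    linarith

lemma borel_norm_le {E K : Type*} [NormedAddCommGroup E] [NormedSpace ℝ E] (e : E ≃ₗᵢ[ℝ] L1 K) :
    borel E ≤ @borel E (weakTopology E) := by
  refine MeasurableSpace.generateFrom_le ?_
  intro U hU
  have hUo : IsOpen U := hU
  let V : ℚ → Set E := fun q => ⋃₀ {W | IsOpen[weakTopology E] W ∧ ∀ y ∈ W, ‖y‖ ≤ q → y ∈ U}
  have hV : ∀ q, IsOpen[weakTopology E] (V q) := fun q =>
    @isOpen_sUnion E (weakTopology E) _ fun W hW => hW.1
  have hUV : U = ⋃ q : ℚ, V q ∩ {y | ‖y‖ ≤ q} := by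
    ext x
    simp only [mem_iUnion, mem_inter_iff, mem_ofPred_eq]
    constructor
    · intro hx
      obtain ⟨δ, hδ, hball⟩ := Metric.isOpen_iff.1 hUo x hx
      obtain ⟨W, hW, hxW, h⟩ := kadec e x (ε := δ / 6) (by positivity)
      obtain ⟨q, hq1, hq2⟩ := exists_rat_btwn (show ‖x‖ < ‖x‖ + δ / 6 by linarith)
      refine ⟨q, ⟨W, ⟨hW, fun y hy hyq => hball ?_⟩, hxW⟩, hq1.le⟩
      rw [Metric.mem_ball, dist_eq_norm]
      have := h y hy (hyq.trans_lt hq2)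
      linarith
    · rintro ⟨q, ⟨W, ⟨hW, h⟩, hxW⟩, hxq⟩
      exact h x hxW hxq
  rw [hUV]
  letI := weakTopology E
  letI : MeasurableSpace E := borel E
  have : BorelSpace E := ⟨rfl⟩
  exact MeasurableSet.iUnion fun q => (hV q).measurableSet.inter (closedBall_weak _).measurableSet

/-- Let `K` be a compact Hausdorff space all of whose subsets are Borel.
If the weak-star and weak Borel σ-algebras of `C*(K)` coincide, then the weak-star and
norm Borel σ-algebras coincide. -/
theorem weakStar_borel_eq_norm_borel_of_eq_weak_borel
    (K : Type*) [TopologicalSpace K] [CompactSpace K] [T2Space K]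
    (hB : ∀ s : Set K, MeasurableSet[borel K] s)
    (h : @borel (StrongDual ℝ C(K, ℝ)) (weakStarTopology C(K, ℝ)) =
      @borel (StrongDual ℝ C(K, ℝ)) (weakTopology (StrongDual ℝ C(K, ℝ)))) :
    @borel (StrongDual ℝ C(K, ℝ)) (weakStarTopology C(K, ℝ)) = borel (StrongDual ℝ C(K, ℝ)) := by
  rw [h]
  refine le_antisymm (borel_anti (norm_le_weak _)) ?_
  exact borel_norm_le (E := StrongDual ℝ C(K, ℝ)) (K := K)
    (LinearIsometryEquiv.ofSurjective (l1Iso K) (l1Iso_surj hB)).symm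
end

section
/- Let K be a compact Hausdorff space. If the Borel σ-algebra generated by the weak-star topology on C*(K) coincides with the Borel σ-algebra generated by the dual norm topology on C*(K), then every subset of K is a Borel set. -/
open NormedSpace MeasureTheory

/-- For a compact Hausdorff space `K`, if the weak-star Borel σ-algebra
of `C*(K)` coincides with the norm Borel σ-algebra, then every subset of `K` is Borel. -/
theorem every_subset_borel_of_weakStar_borel_eq_norm_borel
    (K : Type*) [TopologicalSpace K] [CompactSpace K] [T2Space K]
    (h : @borel (StrongDual ℝ C(K, ℝ)) (weakStarTopology C(K, ℝ)) = borel (StrongDual ℝ C(K, ℝ))) :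
    ∀ s : Set K, MeasurableSet[borel K] s := by
  intro s
  let δ : K → StrongDual ℝ C(K, ℝ) := fun x => ContinuousMap.evalCLM ℝ x
  have hδ : ∀ x (f : C(K, ℝ)), δ x f = f x := fun x f => rfl
  have hc : @Continuous _ _ _ (weakStarTopology C(K, ℝ)) δ := by
    refine continuous_induced_rng.2 (continuous_pi fun f => ?_)
    exact f.continuous
  have hm : @Measurable _ _ (borel K)
      (@borel (StrongDual ℝ C(K, ℝ)) (weakStarTopology C(K, ℝ))) δ :=
    @Continuous.borel_measurable _ _ _ (weakStarTopology C(K, ℝ)) _ hc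
  have hU : IsOpen (⋃ x ∈ s, Metric.ball (δ x) 1) :=
    isOpen_biUnion fun x _ => Metric.isOpen_ball
  have hUm : MeasurableSet[borel (StrongDual ℝ C(K, ℝ))] (⋃ x ∈ s, Metric.ball (δ x) 1) :=
    MeasurableSpace.measurableSet_generateFrom hU
  rw [← h] at hUm
  have h1 := hm hUm
  have h2 : δ ⁻¹' (⋃ x ∈ s, Metric.ball (δ x) 1) = s := by
    ext y
    simp only [Set.mem_preimage, Set.mem_iUnion, Metric.mem_ball, exists_prop]
    constructor
    · rintro ⟨x, hx, hxy⟩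
      by_contra hy
      have hne : x ≠ y := fun e => hy (e ▸ hx)
      obtain ⟨f, hf0, hf1, hf⟩ := exists_continuous_zero_one_of_isClosed
        (isClosed_singleton (x := x)) (isClosed_singleton (x := y)) (by simpa using hne)
      have hn : ‖f‖ ≤ 1 := by
        rw [ContinuousMap.norm_le _ zero_le_one]
        intro z
        rw [Real.norm_eq_abs, abs_of_nonneg (hf z).1]
        exact (hf z).2
      have h3 := (δ y - δ x).le_opNorm f
      have e0 : f x = 0 := hf0 rfl
      have e1 : f y = 1 := hf1 rfl
      rw [sub_apply, hδ, hδ, e0, e1, sub_zero, norm_one] at h3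
      have hxy : ‖δ y - δ x‖ < 1 := by
        have e : dist (δ y) (δ x) = ‖δ y - δ x‖ := dist_eq_norm (E := StrongDual ℝ C(K, ℝ)) _ _
        rw [← e]; exact hxy
      nlinarith [norm_nonneg (δ y - δ x), norm_nonneg f]
    · intro hy
      exact ⟨y, hy, by simp⟩
  rwa [h2] at h1
end

section
/- Let X be an uncountable subset of ℝ such that every subset of X is an Fσ set in the subspace topology of X, and let α(X) denote the one-point compactification of X. Then: (i) every subset of α(X) is a Borel set; (ii) every relatively discrete subset of α(X) is countable; and hence (iii) α(X) is not a countable union of relatively discrete subsets. -/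
open MeasureTheory

/-- Let `X` be an uncountable subset of `ℝ` in which every subset is a
relative `Fσ` set, and let `α(X)` be its one-point compactification. Then (i) every subset
of `α(X)` is Borel; (ii) every relatively discrete subset of `α(X)` is countable; and
hence (iii) `α(X)` is not a countable union of relatively discrete subsets. -/
theorem onePoint_not_countable_union_of_discrete
    (X : Set ℝ) (hX : ¬ X.Countable)
    (hFσ : ∀ s : Set X, ∃ F : ℕ → Set X, (∀ n, IsClosed (F n)) ∧ s = ⋃ n, F n) :
    (∀ s : Set (OnePoint X), MeasurableSet[borel (OnePoint X)] s) ∧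
      (∀ D : Set (OnePoint X),
        (∀ x ∈ D, ∃ U : Set (OnePoint X), IsOpen U ∧ U ∩ D = {x}) → D.Countable) ∧
      ¬ ∃ D : ℕ → Set (OnePoint X),
        (∀ n, ∀ x ∈ D n, ∃ U : Set (OnePoint X), IsOpen U ∧ U ∩ D n = {x}) ∧
        (⋃ n, D n) = Set.univ := by
  have hopen : ∀ V : Set X, IsOpen V →
      MeasurableSet[borel (OnePoint X)] ((fun x : X => (x : OnePoint X)) '' V) := by
    intro V hV
    exact MeasurableSpace.measurableSet_generateFrom
      (OnePoint.isOpenEmbedding_coe.isOpenMap V hV)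
  have hdisc : ∀ D : Set (OnePoint X),
        (∀ x ∈ D, ∃ U : Set (OnePoint X), IsOpen U ∧ U ∩ D = {x}) → D.Countable := by
    intro D hD
    let D' : Set X := (fun x : X => (x : OnePoint X)) ⁻¹' D
    have hd : DiscreteTopology D' := by
      rw [discreteTopology_iff_isOpen_singleton]
      rintro ⟨x, hx⟩
      obtain ⟨U, hU, hUD⟩ := hD x hx
      have h1 : IsOpen ((fun y : D' => ((y : X) : OnePoint X)) ⁻¹' U) :=
        hU.preimage (OnePoint.continuous_coe.comp continuous_subtype_val)
      convert h1 using 1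
      ext ⟨y, hy⟩
      have h2 : ((y : OnePoint X) ∈ U ∩ D) ↔ (y : OnePoint X) = x := by
        rw [hUD]; rfl
      have hy' : (y : OnePoint X) ∈ D := hy
      simp only [Set.mem_inter_iff, hy', and_true, OnePoint.coe_eq_coe] at h2
      simp only [Set.mem_singleton_iff, Subtype.mk.injEq, Set.mem_preimage]
      exact h2.symm
    have hc : D'.Countable :=
      Set.countable_coe_iff.mp (TopologicalSpace.separableSpace_iff_countable.mp inferInstance)
    refine ((hc.image (fun x : X => (x : OnePoint X))).union
      (Set.countable_singleton (OnePoint.infty))).mono ?_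
    intro z hz
    induction z using OnePoint.rec with
    | infty => right; rfl
    | coe x => left; exact ⟨x, hz, rfl⟩
  refine ⟨?_, hdisc, ?_⟩
  · intro s
    obtain ⟨F, hF, hs⟩ := hFσ ((fun x : X => (x : OnePoint X)) ⁻¹' s)
    have himg : MeasurableSet[borel (OnePoint X)] ((fun x : X => (x : OnePoint X)) ''
        ((fun x : X => (x : OnePoint X)) ⁻¹' s)) := by
      rw [hs, Set.image_iUnion]
      refine MeasurableSet.iUnion fun n => ?_
      have h := (hopen _ isOpen_univ).diff (hopen _ (hF n).isOpen_compl)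
      rwa [← Set.image_diff OnePoint.coe_injective, ← Set.compl_eq_univ_diff, compl_compl] at h
    have hinf : MeasurableSet[borel (OnePoint X)] ({OnePoint.infty} : Set (OnePoint X)) := by
      have h := (hopen _ isOpen_univ).compl
      rwa [Set.image_univ, OnePoint.compl_range_coe] at h
    by_cases hi : OnePoint.infty ∈ s
    · convert himg.union hinf using 1
      ext z
      induction z using OnePoint.rec with
      | infty => simp [hi]
      | coe x => simp
    · convert himg using 1
      ext z
      induction z using OnePoint.rec with
      | infty => simp [hi]
      | coe x => simp
  · rintro ⟨D, hD, hU⟩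
    have h : (Set.univ : Set (OnePoint X)).Countable := by
      rw [← hU]
      exact Set.countable_iUnion fun n => hdisc _ (hD n)
    have h2 := h.preimage_of_injOn (f := fun x : X => (x : OnePoint X))
      OnePoint.coe_injective.injOn
    rw [Set.preimage_univ, Set.countable_univ_iff] at h2
    exact hX (Set.countable_coe_iff.mp h2)
end
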